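/- arXiv:1507.07112 — 5 statements merged into one kernel-verified Lean document; each statement's English description precedes it below -/
import Mathlib

section
/- Let (A^{•,•}, ∂, ∂̄) be a double complex of ℂ-vector spaces. If the natural map H_BC^{p,q} → H_A^{p,q} induced by the identity is injective for all (p,q), then the natural map H_BC^{p,q} → H_∂̄^{p,q} is injective for all (p,q). -/
open LinearMap Submodule Module

variable (A : ℤ → ℤ → Type) [∀ p q, AddCommGroup (A p q)] [∀ p q, Module ℂ (A p q)]
variable (d1 : ∀ p q, A p q →ₗ[ℂ] A (p + 1) q)
variable (d2 : ∀ p q, A p q →ₗ[ℂ] A p (q + 1))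

/-- The composition `∂∂̄ : A p q → A (p+1) (q+1)`. -/
abbrev ddb (p q : ℤ) : A p q →ₗ[ℂ] A (p + 1) (q + 1) :=
  (d1 p (q + 1)).comp (d2 p q)

/-- Bott-Chern cohomology at bidegree `(p+1, q+1)`:
`(ker ∂ ∩ ker ∂̄) / im ∂∂̄`. -/
abbrev HBC (p q : ℤ) :=
  ↥(ker (d1 (p+1) (q+1)) ⊓ ker (d2 (p+1) (q+1))) ⧸
    ((range (ddb A d1 d2 p q)).comap (ker (d1 (p+1) (q+1)) ⊓ ker (d2 (p+1) (q+1))).subtype)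

/-- Aeppli cohomology at bidegree `(p+1, q+1)`:
`ker ∂∂̄ / (im ∂ + im ∂̄)`. -/
abbrev HA (p q : ℤ) :=
  ↥(ker (ddb A d1 d2 (p+1) (q+1))) ⧸
    ((range (d1 p (q+1)) ⊔ range (d2 (p+1) q)).comap (ker (ddb A d1 d2 (p+1) (q+1))).subtype)

/-- Dolbeault cohomology `ker ∂̄ / im ∂̄` at bidegree `(p+1, q+1)`. -/
abbrev Hdb (p q : ℤ) :=
  ↥(ker (d2 (p+1) (q+1))) ⧸ ((range (d2 (p+1) q)).comap (ker (d2 (p+1) (q+1))).subtype)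

/-- Conjugate Dolbeault cohomology `ker ∂ / im ∂` at bidegree `(p+1, q+1)`. -/
abbrev Hd (p q : ℤ) :=
  ↥(ker (d1 (p+1) (q+1))) ⧸ ((range (d1 p (q+1))).comap (ker (d1 (p+1) (q+1))).subtype)

variable (hcomm : ∀ p q (x : A p q), d1 p (q+1) (d2 p q x) + d2 (p+1) q (d1 p q x) = 0)

/-- The natural map `H_BC → H_A` induced by the identity. -/
def iBCA (p q : ℤ) : HBC A d1 d2 p q →ₗ[ℂ] HA A d1 d2 p q :=
  Submodule.mapQ _ _
    (LinearMap.codRestrict (ker (ddb A d1 d2 (p+1) (q+1)))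
      ((ker (d1 (p+1) (q+1)) ⊓ ker (d2 (p+1) (q+1))).subtype)
      (fun x => by
        have h2 : d2 (p+1) (q+1) (x : A (p+1) (q+1)) = 0 := (Submodule.mem_inf.mp x.2).2
        simp [LinearMap.mem_ker, LinearMap.comp_apply, h2]))
    (fun x hx => by
      simp only [Submodule.mem_comap, LinearMap.codRestrict_apply] at hx ⊢
      obtain ⟨y, hy⟩ := hx
      exact Submodule.mem_sup_left ⟨d2 p q y, hy⟩)

/-- The natural map `H_BC → H_∂̄` induced by the identity. -/
def iBCdb (p q : ℤ) : HBC A d1 d2 p q →ₗ[ℂ] Hdb A d2 p q :=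
  Submodule.mapQ _ _
    (LinearMap.codRestrict (ker (d2 (p+1) (q+1)))
      ((ker (d1 (p+1) (q+1)) ⊓ ker (d2 (p+1) (q+1))).subtype)
      (fun x => (Submodule.mem_inf.mp x.2).2))
    (fun x hx => by
      obtain ⟨y, hy⟩ := hx
      have hy' : d1 p (q+1) (d2 p q y) = (x : A (p+1) (q+1)) := hy
      refine Submodule.mem_comap.mpr ⟨-(d1 p q y), ?_⟩
      show d2 (p+1) q (-(d1 p q y)) = (x : A (p+1) (q+1))
      have h := hcomm p q y
      rw [map_neg, neg_eq_iff_add_eq_zero, ← hy']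
      simpa [add_comm] using h)

/-- The natural map `H_BC → H_∂` induced by the identity. -/
def iBCd (p q : ℤ) : HBC A d1 d2 p q →ₗ[ℂ] Hd A d1 p q :=
  Submodule.mapQ _ _
    (LinearMap.codRestrict (ker (d1 (p+1) (q+1)))
      ((ker (d1 (p+1) (q+1)) ⊓ ker (d2 (p+1) (q+1))).subtype)
      (fun x => (Submodule.mem_inf.mp x.2).1))
    (fun x hx => by
      simp only [Submodule.mem_comap, LinearMap.codRestrict_apply] at hx ⊢
      obtain ⟨y, hy⟩ := hx
      exact ⟨d2 p q y, hy⟩)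

/-- The natural map `H_∂̄ → H_A` induced by the identity. -/
def idbA (p q : ℤ) : Hdb A d2 p q →ₗ[ℂ] HA A d1 d2 p q :=
  Submodule.mapQ _ _
    (LinearMap.codRestrict (ker (ddb A d1 d2 (p+1) (q+1)))
      ((ker (d2 (p+1) (q+1))).subtype)
      (fun x => by
        have h2 : d2 (p+1) (q+1) (x : A (p+1) (q+1)) = 0 := x.2
        simp [LinearMap.mem_ker, LinearMap.comp_apply, h2]))
    (fun x hx => by
      simp only [Submodule.mem_comap, LinearMap.codRestrict_apply] at hx ⊢
      exact Submodule.mem_sup_right hx)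

/-- The natural map `H_∂ → H_A` induced by the identity. -/
def idA (p q : ℤ) : Hd A d1 p q →ₗ[ℂ] HA A d1 d2 p q :=
  Submodule.mapQ _ _
    (LinearMap.codRestrict (ker (ddb A d1 d2 (p+1) (q+1)))
      ((ker (d1 (p+1) (q+1))).subtype)
      (fun x => by
        have h1 : d1 (p+1) (q+1) (x : A (p+1) (q+1)) = 0 := x.2
        have h := hcomm (p+1) (q+1) (x : A (p+1) (q+1))
        rw [h1, map_zero, add_zero] at h
        simpa [LinearMap.mem_ker, LinearMap.comp_apply] using h))
    (fun x hx => by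
      simp only [Submodule.mem_comap, LinearMap.codRestrict_apply] at hx ⊢
      exact Submodule.mem_sup_left hx)

/-- if `H_BC → H_A` is injective in every bidegree, then
`H_BC → H_∂̄` is injective in every bidegree. -/
theorem stmt2
    (hd1 : ∀ p q (x : A p q), d1 (p+1) q (d1 p q x) = 0)
    (hd2 : ∀ p q (x : A p q), d2 p (q+1) (d2 p q x) = 0)
    (h : ∀ p q : ℤ, Function.Injective (iBCA A d1 d2 p q)) :
    ∀ p q : ℤ, Function.Injective (iBCdb A d1 d2 hcomm p q) := by
  intro p q
  -- The natural map `H_BC → H_A` is the composite of `H_BC → H_∂̄` with `H_∂̄ → H_A`.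
  have hfac : ∀ x, idbA A d1 d2 p q (iBCdb A d1 d2 hcomm p q x) = iBCA A d1 d2 p q x := by
    intro x
    induction x using Submodule.Quotient.induction_on with
    | H x => rfl
  intro x y hxy
  apply h p q
  rw [← hfac, ← hfac, hxy]
end

section
/- Let (A^{•,•}, ∂, ∂̄) be a bounded double complex of finite-dimensional ℂ-vector spaces satisfying the ∂∂̄-Lemma (i.e., ker ∂ ∩ ker ∂̄ ∩ (im ∂ + im ∂̄) = im ∂∂̄ in every bidegree). Then for every (p,q), the natural maps H_BC^{p,q} → H_∂̄^{p,q} and H_∂̄^{p,q} → H_A^{p,q} induced by the identity are isomorphisms. -/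
/-!
If `x` represents a class in `H_∂̄`, then `∂x` is closed for both differentials and `∂`-exact, so the
`∂∂̄`-Lemma gives `∂x = ∂∂̄y`, and `x - ∂̄y` is a Bott-Chern representative: this is surjectivity of
`H_BC → H_∂̄`. The other three claims are the same one-step argument, applied to `x` itself
(injectivity of `H_BC → H_∂̄`), to `∂a` where `x = ∂a + ∂̄b` (injectivity of `H_∂̄ → H_A`), and to
`∂̄x` (surjectivity of `H_∂̄ → H_A`). Each bidegree is treated on its own, with no induction over
the complex or dimension count.
-/

open LinearMap Submodule Module

variable (A : ℤ → ℤ → Type) [∀ p q, AddCommGroup (A p q)] [∀ p q, Module ℂ (A p q)]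
variable (d1 : ∀ p q, A p q →ₗ[ℂ] A (p + 1) q)
variable (d2 : ∀ p q, A p q →ₗ[ℂ] A p (q + 1))

variable (hcomm : ∀ p q (x : A p q), d1 p (q+1) (d2 p q x) + d2 (p+1) q (d1 p q x) = 0)

/-- under the `∂∂̄`-Lemma, the natural maps `H_BC → H_∂̄` and
`H_∂̄ → H_A` are isomorphisms. -/
theorem stmt4
    [∀ p q, FiniteDimensional ℂ (A p q)]
    (m n : ℤ)
    (hbd : ∀ p q : ℤ, (p < m ∨ n < p ∨ q < m ∨ n < q) → Subsingleton (A p q))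
    (hd1 : ∀ p q (x : A p q), d1 (p+1) q (d1 p q x) = 0)
    (hd2 : ∀ p q (x : A p q), d2 p (q+1) (d2 p q x) = 0)
    (hlemma : ∀ p q : ℤ,
      (ker (d1 (p+1) (q+1)) ⊓ ker (d2 (p+1) (q+1))) ⊓
        (range (d1 p (q+1)) ⊔ range (d2 (p+1) q)) = range (ddb A d1 d2 p q)) :
    ∀ p q : ℤ, Function.Bijective (iBCdb A d1 d2 hcomm p q) ∧
      Function.Bijective (idbA A d1 d2 p q) := by
  intro p q
  refine ⟨⟨?_, ?_⟩, ⟨?_, ?_⟩⟩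
  · rw [injective_iff_map_eq_zero]
    intro x hx
    obtain ⟨x, rfl⟩ := Submodule.Quotient.mk_surjective _ x
    obtain ⟨b, hb⟩ := (Submodule.Quotient.mk_eq_zero _).mp hx
    refine (Submodule.Quotient.mk_eq_zero _).mpr ?_
    change (x : A (p+1) (q+1)) ∈ range (ddb A d1 d2 p q)
    rw [← hlemma p q]
    exact ⟨x.2, Submodule.mem_sup_right ⟨b, hb⟩⟩
  · intro x
    obtain ⟨⟨x, hx⟩, rfl⟩ := Submodule.Quotient.mk_surjective _ x
    have hx0 : d2 (p+1) (q+1) x = 0 := hx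
    -- `∂x` is closed for both differentials, so `∂x = ∂∂̄y` and `x - ∂̄y` is the representative.
    have h : d1 (p+1) (q+1) x ∈ range (ddb A d1 d2 (p+1) q) := by
      rw [← hlemma (p+1) q]
      refine ⟨⟨hd1 _ _ x, ?_⟩, Submodule.mem_sup_left ⟨x, rfl⟩⟩
      have h := hcomm (p+1) (q+1) x
      rw [hx0, map_zero, zero_add] at h
      exact h
    obtain ⟨y, hy⟩ := h
    have hy' : d1 (p+1) (q+1) (d2 (p+1) q y) = d1 (p+1) (q+1) x := hy
    refine ⟨Submodule.Quotient.mk ⟨x - d2 (p+1) q y, ?_, ?_⟩, ?_⟩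
    · change d1 (p+1) (q+1) (x - d2 (p+1) q y) = 0
      rw [map_sub, hy', sub_self]
    · change d2 (p+1) (q+1) (x - d2 (p+1) q y) = 0
      rw [map_sub, hx0, hd2, sub_zero]
    · refine (Submodule.Quotient.eq _).mpr ⟨-y, ?_⟩
      change d2 (p+1) q (-y) = (x - d2 (p+1) q y) - x
      rw [map_neg]
      abel
  · rw [injective_iff_map_eq_zero]
    intro x hx
    obtain ⟨⟨x, hx2⟩, rfl⟩ := Submodule.Quotient.mk_surjective _ x
    have hx0 : d2 (p+1) (q+1) x = 0 := hx2
    have hs : x ∈ range (d1 p (q+1)) ⊔ range (d2 (p+1) q) := by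
      have h := (Submodule.Quotient.mk_eq_zero _).mp hx
      exact h
    obtain ⟨_, ⟨a, rfl⟩, _, ⟨b, rfl⟩, rfl⟩ := Submodule.mem_sup.mp hs
    -- `∂a` is closed for both differentials, so `∂a = ∂∂̄y = -∂̄∂y` lies in the image of `∂̄`.
    have h : d1 p (q+1) a ∈ range (ddb A d1 d2 p q) := by
      rw [← hlemma p q]
      refine ⟨⟨hd1 _ _ a, ?_⟩, Submodule.mem_sup_left ⟨a, rfl⟩⟩
      rw [map_add, hd2, add_zero] at hx0
      exact hx0
    obtain ⟨y, hy⟩ := h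
    have hy' : d1 p (q+1) (d2 p q y) = d1 p (q+1) a := hy
    refine (Submodule.Quotient.mk_eq_zero _).mpr ⟨b - d1 p q y, ?_⟩
    change d2 (p+1) q (b - d1 p q y) = d1 p (q+1) a + d2 (p+1) q b
    rw [map_sub, ← hy', eq_neg_of_add_eq_zero_left (hcomm p q y)]
    abel
  · intro x
    obtain ⟨⟨x, hx⟩, rfl⟩ := Submodule.Quotient.mk_surjective _ x
    have hx0 : d1 (p+1) (q+1+1) (d2 (p+1) (q+1) x) = 0 := hx
    -- `∂̄x` is closed for both differentials, so `∂̄x = ∂∂̄y = -∂̄∂y` and `x + ∂y` is the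
    -- representative.
    have h : d2 (p+1) (q+1) x ∈ range (ddb A d1 d2 p (q+1)) := by
      rw [← hlemma p (q+1)]
      exact ⟨⟨hx0, hd2 _ _ x⟩, Submodule.mem_sup_right ⟨x, rfl⟩⟩
    obtain ⟨y, hy⟩ := h
    have hy' : d1 p (q+1+1) (d2 p (q+1) y) = d2 (p+1) (q+1) x := hy
    refine ⟨Submodule.Quotient.mk ⟨x + d1 p (q+1) y, ?_⟩, ?_⟩
    · change d2 (p+1) (q+1) (x + d1 p (q+1) y) = 0
      rw [map_add, ← hy']
      exact hcomm p (q+1) y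
    · refine (Submodule.Quotient.eq _).mpr ?_
      refine Submodule.mem_sup_left ⟨y, ?_⟩
      change d1 p (q+1) y = (x + d1 p (q+1) y) - x
      abel
end

section
/- Let (A^{•,•}, ∂, ∂̄) be a bounded double complex of finite-dimensional ℂ-vector spaces, and let b_k = dim H^k_dR denote the dimension of the cohomology of the total complex (⊕_{p+q=k} A^{p,q}, ∂ + ∂̄) in degree k. Then for every k ∈ ℤ, dim_ℂ (⊕_{p+q=k} H_∂̄^{p,q}) ≥ b_k (the Frölicher inequality). -/
/-! The inequality reduces to a comparison of ranks. Rank-nullity gives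
`dim H^k = dim Tot k - rank D_k - rank D_{k-1}` for the total complex and
`h^{p,q} = dim A^{p,q} - rank ∂̄^{p,q} - rank ∂̄^{p,q-1}` for the columns (`finrank_homology`), and
`dim Tot k = ∑ dim A^{p,k-p}` (`finite_finrank_directSum`). So the inequality amounts to
`∑_p rank ∂̄^{p,k-p} ≤ rank D_k` (`sum_rank_le_rank_D`).
This holds because `D_k` is block triangular for the grading by `p`, with diagonal blocks `∂̄`:
after choosing linear sections of `∂̄` over its ranges, `⨁_p range ∂̄^{p,k-p} → Tot k → Tot (k+1)`
is injective, since the lowest nonzero component of an element is reproduced by the diagonal block.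
-/

open LinearMap Submodule Module

variable (A : ℤ → ℤ → Type) [∀ p q, AddCommGroup (A p q)] [∀ p q, Module ℂ (A p q)]
variable (d1 : ∀ p q, A p q →ₗ[ℂ] A (p + 1) q)
variable (d2 : ∀ p q, A p q →ₗ[ℂ] A p (q + 1))

open DirectSum in
/-- The total complex in degree `k`: `⊕_{p+q=k} A^{p,q}`. -/
abbrev Tot (k : ℤ) : Type _ := ⨁ p : ℤ, A p (k - p)

/-- Transport along equalities of bidegrees. -/
def lcast {p q p' q' : ℤ} (hp : p = p') (hq : q = q') : A p q ≃ₗ[ℂ] A p' q' := by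
  subst hp; subst hq; exact LinearEquiv.refl ℂ (A p q)

/-- The total differential `∂ + ∂̄ : Tot k → Tot (k+1)`. -/
def D (k : ℤ) : Tot A k →ₗ[ℂ] Tot A (k + 1) :=
  DirectSum.toModule ℂ ℤ (Tot A (k + 1)) fun p =>
    ((DirectSum.lof ℂ ℤ (fun r => A r (k + 1 - r)) (p + 1)).comp
      ((lcast A (rfl : (p + 1 : ℤ) = p + 1)
        (by omega : k - p = k + 1 - (p + 1))).toLinearMap.comp (d1 p (k - p))))
    + ((DirectSum.lof ℂ ℤ (fun r => A r (k + 1 - r)) p).comp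
      ((lcast A (rfl : (p : ℤ) = p)
        (by omega : k - p + 1 = k + 1 - p)).toLinearMap.comp (d2 p (k - p))))

/-- De Rham cohomology of the total complex in degree `k+1`. -/
abbrev HdR (k : ℤ) :=
  ↥(ker (D A d1 d2 (k + 1))) ⧸
    ((range (D A d1 d2 k)).comap (ker (D A d1 d2 (k + 1))).subtype)

section Auxiliary

theorem finite_finrank_directSum (B : ℤ → Type) [∀ p, AddCommGroup (B p)] [∀ p, Module ℂ (B p)]
    [∀ p, FiniteDimensional ℂ (B p)] (s : Finset ℤ) (hs : ∀ p, p ∉ s → Subsingleton (B p)) :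
    FiniteDimensional ℂ (DirectSum ℤ B) ∧
      finrank ℂ (DirectSum ℤ B) = ∑ p ∈ s, finrank ℂ (B p) := by
  let e : (∀ i : (↑s : Set ℤ), B i) ≃ₗ[ℂ] DirectSum ℤ B :=
    LinearEquiv.ofBijective (DirectSum.lmk ℂ ℤ B s) (by
      refine ⟨DirectSum.mk_injective s, fun x => ⟨fun i => x i, ?_⟩⟩
      refine DFinsupp.ext fun i => ?_
      by_cases hi : i ∈ s
      · exact DirectSum.mk_apply_of_mem hi
      · have := hs i hi
        exact Subsingleton.elim _ _)
  refine ⟨Module.Finite.equiv e, ?_⟩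
  rw [← e.finrank_eq, Module.finrank_pi_fintype]
  exact Finset.sum_coe_sort s (fun i => finrank ℂ (B i))

theorem finrank_homology {U V W : Type} [AddCommGroup U] [Module ℂ U] [AddCommGroup V] [Module ℂ V]
    [AddCommGroup W] [Module ℂ W] [FiniteDimensional ℂ V]
    (f : U →ₗ[ℂ] V) (g : V →ₗ[ℂ] W) (h : ∀ x, g (f x) = 0) :
    finrank ℂ (↥(ker g) ⧸ (range f).comap (ker g).subtype) + finrank ℂ (range g)
      + finrank ℂ (range f) = finrank ℂ V := by
  have hle : range f ≤ ker g := by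
    rintro _ ⟨x, rfl⟩
    exact h x
  have h1 := Submodule.finrank_quotient_add_finrank ((range f).comap (ker g).subtype)
  have h2 := (Submodule.comapSubtypeEquivOfLe hle).finrank_eq
  have h3 := LinearMap.finrank_range_add_finrank_ker g
  omega

/-- The inclusion of `A^{p,q}` into the total complex in degree `k = p + q`. Keeping `p`, `q` and `k`
independent lets the formula for `D` avoid transports between bidegrees. -/
def incl (k p q : ℤ) (h : p + q = k) : A p q →ₗ[ℂ] Tot A k :=
  (DirectSum.lof ℂ ℤ (fun r => A r (k - r)) p).comp
    (lcast A (rfl : p = p) (by omega : q = k - p)).toLinearMap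

theorem lof_eq_incl (k p : ℤ) (x : A p (k - p)) :
    DirectSum.lof ℂ ℤ (fun r => A r (k - r)) p x = incl A k p (k - p) (by omega) x := rfl

theorem D_incl (k p q : ℤ) (h : p + q = k) (x : A p q) :
    D A d1 d2 k (incl A k p q h x) =
      incl A (k + 1) (p + 1) q (by omega) (d1 p q x) +
      incl A (k + 1) p (q + 1) (by omega) (d2 p q x) := by
  obtain rfl : q = k - p := by omega
  rw [← lof_eq_incl, D, DirectSum.toModule_lof]
  rfl

theorem D_D (hd1 : ∀ p q (x : A p q), d1 (p+1) q (d1 p q x) = 0)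
    (hd2 : ∀ p q (x : A p q), d2 p (q+1) (d2 p q x) = 0)
    (hc : ∀ p q (x : A p q), d1 p (q+1) (d2 p q x) + d2 (p+1) q (d1 p q x) = 0)
    (k : ℤ) (x : Tot A k) : D A d1 d2 (k + 1) (D A d1 d2 k x) = 0 := by
  suffices h : (D A d1 d2 (k + 1)).comp (D A d1 d2 k) = 0 from LinearMap.congr_fun h x
  refine DirectSum.linearMap_ext ℂ fun p => LinearMap.ext fun y => ?_
  simp only [LinearMap.comp_apply, LinearMap.zero_comp, LinearMap.zero_apply]
  rw [lof_eq_incl, D_incl, map_add, D_incl, D_incl, hd1, hd2, map_zero, map_zero, zero_add,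
    add_zero, ← map_add, add_comm (d2 _ _ _), hc, map_zero]

theorem D_apply_succ (k p : ℤ) (x : Tot A k) :
    D A d1 d2 k x (p + 1) =
      lcast A rfl (by omega) (d2 (p + 1) (k - (p + 1)) (x (p + 1))) +
      lcast A rfl (by omega) (d1 p (k - p) (x p)) := by
  induction x using DirectSum.induction_on with
  | zero => simp
  | add x y hx hy =>
    simp only [map_add, DirectSum.add_apply, hx, hy]
    abel
  | of j y =>
    change D A d1 d2 k (DirectSum.lof ℂ ℤ (fun r => A r (k - r)) j y) (p + 1) =
      lcast A rfl (by omega) (d2 (p + 1) (k - (p + 1))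
        (DirectSum.lof ℂ ℤ (fun r => A r (k - r)) j y (p + 1))) +
      lcast A rfl (by omega) (d1 p (k - p) (DirectSum.lof ℂ ℤ (fun r => A r (k - r)) j y p))
    rw [D, DirectSum.toModule_lof]
    simp only [LinearMap.add_apply, LinearMap.comp_apply, DirectSum.add_apply,
      DirectSum.lof_eq_of]
    by_cases h1 : j = p
    · subst h1
      rw [DirectSum.of_eq_same, DirectSum.of_eq_of_ne _ _ _ (by omega),
        DirectSum.of_eq_of_ne _ _ _ (by omega), DirectSum.of_eq_same, map_zero, map_zero,
        zero_add, add_zero]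
      rfl
    · by_cases h2 : j = p + 1
      · subst h2
        rw [DirectSum.of_eq_same, DirectSum.of_eq_of_ne _ _ _ (by omega),
          DirectSum.of_eq_same, DirectSum.of_eq_of_ne _ _ _ (by omega), map_zero, map_zero,
          zero_add, add_zero]
        rfl
      · rw [DirectSum.of_eq_of_ne _ _ _ (by omega), DirectSum.of_eq_of_ne _ _ _ (by omega),
          DirectSum.of_eq_of_ne _ _ _ (by omega), DirectSum.of_eq_of_ne _ _ _ (by omega)]
        simp

/-- The rank of the block triangular map `D` is at least the sum of the ranks of its diagonal
blocks `∂̄`. -/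
theorem sum_rank_le_rank_D [∀ p q, FiniteDimensional ℂ (A p q)] (a b : ℤ)
    (hbd : ∀ p q : ℤ, p ∉ Finset.Icc a b → Subsingleton (A p q)) (k : ℤ) :
    ∑ p ∈ Finset.Icc a b, finrank ℂ (range (d2 p (k - p))) ≤
      finrank ℂ (range (D A d1 d2 k)) := by
  have hsec : ∀ p, ∃ g : range (d2 p (k - p)) →ₗ[ℂ] A p (k - p),
      (d2 p (k - p)).rangeRestrict.comp g = LinearMap.id := fun p =>
    LinearMap.exists_rightInverse_of_surjective _ (LinearMap.range_rangeRestrict _)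
  choose g hg using hsec
  have hg' : ∀ p y, d2 p (k - p) (g p y) = y := fun p y =>
    congrArg Subtype.val (LinearMap.congr_fun (hg p) y)
  have hsub : ∀ p, p ∉ Finset.Icc a b → Subsingleton (range (d2 p (k - p))) := fun p hp => by
    have := hbd p (k - p + 1) hp
    infer_instance
  have := (finite_finrank_directSum (fun p => A p (k + 1 - p)) (Finset.Icc a b)
    (fun p hp => hbd p _ hp)).1
  rw [← (finite_finrank_directSum (fun p => range (d2 p (k - p))) (Finset.Icc a b) hsub).2]
  refine LinearMap.finrank_le_finrank_of_injective
    (f := (D A d1 d2 k).rangeRestrict.comp (DirectSum.lmap g)) ?_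
  rw [← LinearMap.ker_eq_bot, LinearMap.ker_eq_bot']
  intro x hx
  have hx' : D A d1 d2 k (DirectSum.lmap g x) = 0 := congrArg Subtype.val hx
  have hlow : ∀ p, p < a → x p = 0 := fun p hp => by
    have := hsub p (by simp; omega)
    exact Subsingleton.elim _ _
  -- the components vanish one after the other, starting below the support
  have hall : ∀ p, a - 1 ≤ p → x p = 0 := by
    intro p hp
    induction p, hp using Int.leInduction with
    | base => exact hlow _ (by omega)
    | succ p _ ih =>
      have h := D_apply_succ A d1 d2 k p (DirectSum.lmap g x)
      rw [hx', DirectSum.lmap_apply, DirectSum.lmap_apply, ih, map_zero, map_zero, map_zero,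
        add_zero, hg', DirectSum.zero_apply, eq_comm, LinearEquiv.map_eq_zero_iff] at h
      exact Subtype.ext h
  refine DFinsupp.ext fun p => ?_
  by_cases hp : p < a
  · exact hlow p hp
  · exact hall p (by omega)

end Auxiliary

/-- the Frölicher inequality `h^k_∂̄ ≥ b_k`. -/
theorem stmt5
    [∀ p q, FiniteDimensional ℂ (A p q)]
    (m n : ℤ)
    (hbd : ∀ p q : ℤ, (p < m ∨ n < p ∨ q < m ∨ n < q) → Subsingleton (A p q))
    (hd1 : ∀ p q (x : A p q), d1 (p+1) q (d1 p q x) = 0)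
    (hd2 : ∀ p q (x : A p q), d2 p (q+1) (d2 p q x) = 0)
    (hc : ∀ p q (x : A p q), d1 p (q+1) (d2 p q x) + d2 (p+1) q (d1 p q x) = 0)
    :
    ∀ k : ℤ, finrank ℂ (HdR A d1 d2 k) ≤
      (∑ p ∈ Finset.Icc (m - 2) (n + 2), finrank ℂ (Hdb A d2 p (k + 1 - p - 2))) := by
  intro k
  have hs : ∀ p q, p ∉ Finset.Icc (m - 2 + 1) (n + 2 + 1) → Subsingleton (A p q) :=
    fun p q hp => hbd p q (by simp only [Finset.mem_Icc] at hp; omega)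
  obtain ⟨hfin, hdim⟩ := finite_finrank_directSum (fun p => A p (k + 1 - p)) _
    (fun p hp => hs p _ hp)
  have hdR := finrank_homology (D A d1 d2 k) (D A d1 d2 (k + 1)) (D_D A d1 d2 hd1 hd2 hc k)
  have hr0 := sum_rank_le_rank_D A d1 d2 _ _ hs k
  have hr1 := sum_rank_le_rank_D A d1 d2 _ _ hs (k + 1)
  have hdb : ∑ p ∈ Finset.Icc (m - 2) (n + 2), (finrank ℂ (Hdb A d2 p (k + 1 - p - 2)) +
      finrank ℂ (range (d2 (p + 1) (k + 1 - (p + 1)))) +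
      finrank ℂ (range (d2 (p + 1) (k - (p + 1))))) =
      ∑ p ∈ Finset.Icc (m - 2) (n + 2), finrank ℂ (A (p + 1) (k + 1 - (p + 1))) := by
    refine Finset.sum_congr rfl fun p _ => ?_
    have h := finrank_homology (d2 (p + 1) (k + 1 - p - 2)) (d2 (p + 1) (k + 1 - p - 2 + 1))
      (hd2 _ _)
    have e1 : k + 1 - (p + 1) = k + 1 - p - 2 + 1 := by omega
    have e2 : k - (p + 1) = k + 1 - p - 2 := by omega
    rw [e1, e2]
    exact h
  have hshift : ∀ F : ℤ → ℕ, ∑ p ∈ Finset.Icc (m - 2 + 1) (n + 2 + 1), F p =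
      ∑ p ∈ Finset.Icc (m - 2) (n + 2), F (p + 1) := fun F => by
    rw [← Finset.map_add_right_Icc, Finset.sum_map]
    rfl
  rw [hshift] at hdim hr0 hr1
  rw [Finset.sum_add_distrib, Finset.sum_add_distrib] at hdb
  change finrank ℂ (HdR A d1 d2 k) + _ + _ = finrank ℂ (Tot A (k + 1)) at hdR
  change finrank ℂ (Tot A (k + 1)) = _ at hdim
  omega
end

section
/- Let (A^{•,•}, ∂, ∂̄) be a bounded double complex of finite-dimensional ℂ-vector spaces. Then the ∂∂̄-Lemma holds (ker ∂ ∩ ker ∂̄ ∩ (im ∂ + im ∂̄) = im ∂∂̄ in every bidegree) if and only if for every k ∈ ℤ, h^k_BC + h^k_A = 2 b_k, where h^k_BC = Σ_{p+q=k} dim H_BC^{p,q}, h^k_A = Σ_{p+q=k} dim H_A^{p,q}, and b_k is the dimension of degree-k cohomology of the total complex. -/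
/-!
Write `D = ∂ + ∂̄` and count dimensions in total degree `k`. With `rk` denoting ranks of maps out of
the degree given, rank-nullity and the modular identity for sums and intersections give

`h_BC^k + h_A^k - 2 b_k = [dim ker ∂∂̄ - dim (ker ∂ + ker ∂̄)] + [dim (im ∂ ∩ im ∂̄) - dim im ∂∂̄]`
`  + (rk D - rk ∂)^k + (rk D - rk ∂̄)^k + (rk D - rk ∂)^(k-1) + (rk D - rk ∂̄)^(k-1)`

(`finrank_HBC`, `finrank_HA`, `finrank_HdR`). Every term is nonnegative: the first two because
`ker ∂ + ker ∂̄ ⊆ ker ∂∂̄` and `im ∂∂̄ ⊆ im ∂ ∩ im ∂̄`, the others because `D` is block-triangular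
for the column filtration, with diagonal blocks `∂̄` in one ordering of the columns and `∂` in the
other (`sum_rk1_le`, `sum_rk2_le`). Hence equality for all `k` means that all these terms vanish.

If they vanish, `rk D = rk ∂̄ = rk ∂` gives `∂(ker ∂̄) ⊆ im ∂̄` and `∂̄(ker ∂) ⊆ im ∂` (`degen2`,
`degen1`). An element `z = ∂x + ∂̄y` of `ker ∂ ∩ ker ∂̄` has `x, y ∈ ker ∂∂̄ = ker ∂ + ker ∂̄`, so one
may take `∂̄x = 0` and `∂y = 0`; then `∂x` and `∂̄y` lie in `im ∂ ∩ im ∂̄ = im ∂∂̄`.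

Conversely, under the `∂∂̄`-Lemma the two bracketed terms vanish by direct manipulation, and the
ranks agree because `D` of a `∂̄`-closed element of pure bidegree is also `D` of an element of the
next column, and symmetrically for `∂` (`rank_eq2`, `rank_eq1`).
-/

open LinearMap Submodule Module

variable (A : ℤ → ℤ → Type) [∀ p q, AddCommGroup (A p q)] [∀ p q, Module ℂ (A p q)]
variable (d1 : ∀ p q, A p q →ₗ[ℂ] A (p + 1) q)
variable (d2 : ∀ p q, A p q →ₗ[ℂ] A p (q + 1))

/-! ### Block-triangular linear maps -/

/-- The sum map `⨁ E i → U` of a finite family of linear maps `φ i : E i → U`. -/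
noncomputable abbrev sumMap {ι : Type} [Fintype ι] [DecidableEq ι] {E : ι → Type} {U : Type}
    [∀ i, AddCommGroup (E i)] [∀ i, Module ℂ (E i)] [AddCommGroup U] [Module ℂ U]
    (φ : ∀ i, E i →ₗ[ℂ] U) : (∀ i, E i) →ₗ[ℂ] U :=
  LinearMap.lsum ℂ E ℂ φ

section Triangular

variable {ι : Type} [Fintype ι] [DecidableEq ι] {E G : ι → Type} {U : Type}
  [∀ i, AddCommGroup (E i)] [∀ i, Module ℂ (E i)]
  [∀ i, AddCommGroup (G i)] [∀ i, Module ℂ (G i)]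
  [AddCommGroup U] [Module ℂ U]

theorem sumMap_apply (φ : ∀ i, E i →ₗ[ℂ] U) (w : ∀ i, E i) :
    sumMap φ w = ∑ i, φ i (w i) := by
  simp [sumMap, LinearMap.lsum_apply]

theorem apply_mem_range_sumMap (φ : ∀ i, E i →ₗ[ℂ] U) (i : ι) (x : E i) :
    φ i x ∈ range (sumMap φ) := by
  refine ⟨Pi.single i x, ?_⟩
  rw [sumMap_apply, Finset.sum_eq_single i]
  · simp
  · intro j _ hj
    simp [Pi.single_eq_of_ne hj]
  · simp

theorem range_sumMap_le (φ : ∀ i, E i →ₗ[ℂ] U) (P : Submodule ℂ U)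
    (h : ∀ i x, φ i x ∈ P) : range (sumMap φ) ≤ P := by
  rintro _ ⟨w, rfl⟩
  rw [sumMap_apply]
  exact Submodule.sum_mem _ fun i _ => h i _

variable (c : ι → ℤ) (hcinj : Function.Injective c)
  (φ : ∀ i, E i →ₗ[ℂ] U) (β : ∀ i, E i →ₗ[ℂ] G i) (π : ∀ i, U →ₗ[ℂ] G i)
  (hdiag : ∀ i x, π i (φ i x) = β i x)
  (htri : ∀ r i x, c r < c i → π r (φ i x) = 0)

include hcinj hdiag htri

/-- Only the leading entry of `w` contributes to the leading component of its image. -/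
theorem leading_component (w : ∀ i, E i) (r : ι) (hw : ∀ i, c i < c r → w i = 0) :
    π r (sumMap φ w) = β r (w r) := by
  rw [sumMap_apply, map_sum, Finset.sum_eq_single r]
  · exact hdiag r _
  · intro i _ hi
    rcases lt_trichotomy (c i) (c r) with h | h | h
    · rw [hw i h]; simp
    · exact absurd (hcinj h) hi
    · exact htri r i _ h
  · simp

/-- If the image has no components below `j`, neither has `w`: otherwise the least nonzero entry
would be visible in the image, `β` being injective on the entries of `w`. -/
theorem entries_zero_below (w : ∀ i, E i) (hw : ∀ i, β i (w i) = 0 → w i = 0) (j : ι)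
    (hj : ∀ r, c r < c j → π r (sumMap φ w) = 0) : ∀ r, c r < c j → w r = 0 := by
  by_contra! hne
  obtain ⟨r₀, hr₀, hr₀'⟩ := hne
  classical
  obtain ⟨r, hr, hmin⟩ := Finset.exists_min_image
    (Finset.univ.filter fun r => c r < c j ∧ w r ≠ 0) c ⟨r₀, by simp [hr₀, hr₀']⟩
  simp only [Finset.mem_filter, Finset.mem_univ, true_and] at hr hmin
  apply hr.2
  apply hw
  rw [← leading_component c hcinj φ β π hdiag htri w r, hj r hr.1]
  intro i hi
  by_contra h
  exact absurd (hmin i ⟨hi.trans hr.1, h⟩) (not_le.mpr hi)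

/-- A block-triangular map restricted to complements of the kernels of its diagonal blocks `β i` is
injective, and it sees each diagonal block on the leading component of its image. -/
theorem exists_complements [∀ i, FiniteDimensional ℂ (E i)] :
    ∃ W : ∀ i, Submodule ℂ (E i), (∀ i, IsCompl (ker (β i)) (W i)) ∧
      finrank ℂ (range (sumMap fun i => φ i ∘ₗ (W i).subtype)) = ∑ i, finrank ℂ (range (β i)) ∧
      range (sumMap fun i => φ i ∘ₗ (W i).subtype) ≤ range (sumMap φ) ∧
      ∀ u ∈ range (sumMap fun i => φ i ∘ₗ (W i).subtype), ∀ j,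
        (∀ r, c r < c j → π r u = 0) → π j u ∈ range (β j) := by
  choose W hW using fun i => Submodule.exists_isCompl (ker (β i))
  have hker : ∀ i (x : W i), (β i ∘ₗ (W i).subtype) x = 0 → x = 0 := by
    intro i x hx
    have : (x : E i) ∈ ker (β i) ⊓ W i := ⟨hx, x.2⟩
    rw [(hW i).inf_eq_bot] at this
    exact Subtype.ext ((Submodule.mem_bot ℂ).mp this)
  have hd : ∀ i x, π i ((φ i ∘ₗ (W i).subtype) x) = (β i ∘ₗ (W i).subtype) x :=
    fun i x => hdiag i x
  have ht : ∀ r i x, c r < c i → π r ((φ i ∘ₗ (W i).subtype) x) = 0 :=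
    fun r i x h => htri r i x h
  refine ⟨W, hW, ?_, ?_, ?_⟩
  · rw [LinearMap.finrank_range_of_inj, Module.finrank_pi_fintype]
    · refine Finset.sum_congr rfl fun i _ => ?_
      have h1 := Submodule.finrank_add_eq_of_isCompl (hW i)
      have h2 := (β i).finrank_range_add_finrank_ker
      omega
    · rw [← LinearMap.ker_eq_bot, LinearMap.ker_eq_bot']
      intro w hw
      have hz : ∀ j r, c r < c j → w r = 0 := fun j =>
        entries_zero_below c hcinj _ _ π hd ht w (fun i => hker i (w i)) j
          (fun r _ => by rw [hw, map_zero])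
      funext j
      apply hker j
      rw [← leading_component c hcinj _ _ π hd ht w j (hz j), hw, map_zero]
  · exact range_sumMap_le _ _ fun i x => apply_mem_range_sumMap φ i _
  · rintro _ ⟨w, rfl⟩ j hj
    rw [leading_component c hcinj _ _ π hd ht w j
      (entries_zero_below c hcinj _ _ π hd ht w (fun i => hker i (w i)) j hj)]
    exact ⟨_, rfl⟩

theorem sum_rank_diag_le [∀ i, FiniteDimensional ℂ (E i)] :
    ∑ i, finrank ℂ (range (β i)) ≤ finrank ℂ (range (sumMap φ)) := by
  obtain ⟨W, -, h1, h2, -⟩ := exists_complements c hcinj φ β π hdiag htri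
  rw [← h1]
  exact Submodule.finrank_mono h2

/-- If the rank equals the sum of the ranks of the diagonal blocks (degeneration), leading
components of the image lie in the images of the diagonal blocks. -/
theorem leading_mem_of_rank_eq [∀ i, FiniteDimensional ℂ (E i)]
    (heq : ∑ i, finrank ℂ (range (β i)) = finrank ℂ (range (sumMap φ)))
    (u : U) (hu : u ∈ range (sumMap φ)) (j : ι) (hj : ∀ r, c r < c j → π r u = 0) :
    π j u ∈ range (β j) := by
  obtain ⟨W, -, h1, h2, h3⟩ := exists_complements c hcinj φ β π hdiag htri
  refine h3 u ?_ j hj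
  rwa [Submodule.eq_of_le_of_finrank_eq h2 (h1.trans heq)]

/-- If the image of the kernel of each diagonal block is accounted for by later indices,
the rank is the sum of the ranks of the diagonal blocks. -/
theorem rank_eq_of_ker [∀ i, FiniteDimensional ℂ (E i)]
    (h : ∀ i x, β i x = 0 → φ i x = 0 ∨ ∃ r y, c i < c r ∧ φ i x = φ r y) :
    ∑ i, finrank ℂ (range (β i)) = finrank ℂ (range (sumMap φ)) := by
  obtain ⟨W, hW, h1, h2, -⟩ := exists_complements c hcinj φ β π hdiag htri
  rw [← h1]
  suffices hR : range (sumMap fun i => φ i ∘ₗ (W i).subtype) = range (sumMap φ) by rw [hR]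
  refine le_antisymm h2 (range_sumMap_le _ _ ?_)
  set P := range (sumMap fun i => φ i ∘ₗ (W i).subtype)
  by_contra! hne
  obtain ⟨i₀, x₀, hx₀⟩ := hne
  classical
  obtain ⟨i, hi, hmax⟩ := Finset.exists_max_image
    (Finset.univ.filter fun i => ∃ x, φ i x ∉ P) c ⟨i₀, by simpa using ⟨x₀, hx₀⟩⟩
  simp only [Finset.mem_filter, Finset.mem_univ, true_and] at hi hmax
  obtain ⟨x, hx⟩ := hi
  apply hx
  obtain ⟨z, hz, w, hw, rfl⟩ := Submodule.mem_sup.mp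
    (show x ∈ ker (β i) ⊔ W i by rw [(hW i).sup_eq_top]; trivial)
  rw [map_add]
  refine Submodule.add_mem _ ?_
    (apply_mem_range_sumMap (fun i => φ i ∘ₗ (W i).subtype) i ⟨w, hw⟩)
  rcases h i z hz with h0 | ⟨r, y, hr, hy⟩
  · rw [h0]; exact zero_mem _
  · rw [hy]
    by_contra hn
    exact absurd (hmax r ⟨y, hn⟩) (not_le.mpr hr)

end Triangular

/-! ### Summands of the total complex -/

/-- The inclusion of the summand `A p q` into the total complex in degree `k = p + q`. -/
noncomputable def tin (k p q : ℤ) (h : p + q = k) : A p q →ₗ[ℂ] Tot A k :=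
  (DirectSum.lof ℂ ℤ (fun r => A r (k - r)) p).comp
    (lcast A (rfl : p = p) (by omega : q = k - p)).toLinearMap

/-- The projection of the total complex in degree `k = p + q` onto the summand `A p q`. -/
noncomputable def tout (k p q : ℤ) (h : p + q = k) : Tot A k →ₗ[ℂ] A p q :=
  (lcast A (rfl : p = p) (by omega : k - p = q)).toLinearMap.comp
    (DirectSum.component ℂ ℤ (fun r => A r (k - r)) p)

theorem tout_tin (k p q : ℤ) (h : p + q = k) (x : A p q) :
    tout A k p q h (tin A k p q h x) = x := by
  obtain rfl : q = k - p := by omega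
  simp [tout, tin, lcast, DirectSum.component.lof_self]

theorem tout_tin_of_ne (k p q p' q' : ℤ) (h : p + q = k) (h' : p' + q' = k) (hne : p' ≠ p)
    (x : A p' q') : tout A k p q h (tin A k p' q' h' x) = 0 := by
  have : DirectSum.component ℂ ℤ (fun r => A r (k - r)) p (tin A k p' q' h' x) = 0 := by
    simp [tin, DirectSum.component.of, hne]
  simp [tout, this]

theorem D_tin (k p q : ℤ) (h : p + q = k) (x : A p q) :
    D A d1 d2 k (tin A k p q h x) =
      tin A (k + 1) (p + 1) q (by omega) (d1 p q x) +
      tin A (k + 1) p (q + 1) (by omega) (d2 p q x) := by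
  obtain rfl : q = k - p := by omega
  simp [D, tin, lcast, DirectSum.toModule_lof]

/-- A linear map on the total complex takes values in `P` once it does so on each summand. -/
theorem tot_hom_mem (k : ℤ) {U : Type} [AddCommGroup U] [Module ℂ U] (f : Tot A k →ₗ[ℂ] U)
    (P : Submodule ℂ U) (h : ∀ p q hpq x, f (tin A k p q hpq x) ∈ P) (t : Tot A k) : f t ∈ P := by
  induction t using DirectSum.induction_on with
  | zero => simp
  | of p x => exact h p (k - p) (by omega) x
  | add x y hx hy => rw [map_add]; exact P.add_mem hx hy

/-- The inclusions of the summands with index in the finite set `S`. -/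
noncomputable abbrev tins (S : Finset ℤ) (k : ℤ) (i : S) : A i (k - i) →ₗ[ℂ] Tot A k :=
  tin A k i (k - i) (by omega)

theorem tin_mem_tins (S : Finset ℤ) (hS : ∀ p q, p ∉ S → Subsingleton (A p q))
    (k p q : ℤ) (h : p + q = k) (x : A p q) :
    (∃ hp : p ∈ S, ∃ y, tin A k p q h x = tins A S k ⟨p, hp⟩ y) ∨ tin A k p q h x = 0 := by
  by_cases hp : p ∈ S
  · left
    obtain rfl : q = k - p := by omega
    exact ⟨hp, x, rfl⟩
  · right
    have := hS p q hp
    rw [Subsingleton.elim x 0, map_zero]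

/-- Outside `S` all columns vanish, so the total complex is the finite product over `S`. -/
theorem tot_bijective (S : Finset ℤ) (hS : ∀ p q, p ∉ S → Subsingleton (A p q)) (k : ℤ) :
    Function.Bijective (sumMap (tins A S k)) := by
  constructor
  · rw [← LinearMap.ker_eq_bot, LinearMap.ker_eq_bot']
    intro w hw
    funext j
    have h := congrArg (tout A k j (k - j) (by omega)) hw
    rw [sumMap_apply, map_sum, Finset.sum_eq_single j, tout_tin, map_zero] at h
    · exact h
    · intro i _ hij
      exact tout_tin_of_ne _ _ _ _ _ _ _ _ (fun h => hij (Subtype.ext h)) _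
    · simp
  · intro t
    refine tot_hom_mem A k LinearMap.id (range (sumMap (tins A S k))) ?_ t
    intro p q h x
    rw [LinearMap.id_apply]
    rcases tin_mem_tins A S hS k p q h x with ⟨hp, y, hy⟩ | h0
    · rw [hy]; exact apply_mem_range_sumMap _ _ _
    · rw [h0]; exact zero_mem _

theorem range_D_eq (S : Finset ℤ) (hS : ∀ p q, p ∉ S → Subsingleton (A p q)) (k : ℤ) :
    range (sumMap fun i => D A d1 d2 k ∘ₗ tins A S k i) = range (D A d1 d2 k) := by
  apply le_antisymm
  · exact range_sumMap_le _ _ fun i x => ⟨tins A S k i x, rfl⟩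
  · rintro _ ⟨t, rfl⟩
    refine tot_hom_mem A k _ _ ?_ t
    intro p q h x
    rcases tin_mem_tins A S hS k p q h x with ⟨hp, y, hy⟩ | h0
    · rw [hy]
      exact apply_mem_range_sumMap (fun i => D A d1 d2 k ∘ₗ tins A S k i) ⟨p, hp⟩ y
    · rw [h0, map_zero]; exact zero_mem _

/-- Dimension of a subquotient `K / R` of an ambient space, as formed in the cohomologies. -/
theorem finrank_quot_comap {V : Type} [AddCommGroup V] [Module ℂ V] [FiniteDimensional ℂ V]
    (K R : Submodule ℂ V) (h : R ≤ K) :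
    finrank ℂ (K ⧸ R.comap K.subtype) + finrank ℂ R = finrank ℂ K := by
  rw [← (Submodule.comapSubtypeEquivOfLe h).finrank_eq]
  exact Submodule.finrank_quotient_add_finrank _

/-- The rank of `∂` at bidegree `(p, q)`. -/
noncomputable def rk1 (p q : ℤ) : ℕ := finrank ℂ (range (d1 p q))

/-- The rank of `∂̄` at bidegree `(p, q)`. -/
noncomputable def rk2 (p q : ℤ) : ℕ := finrank ℂ (range (d2 p q))

/-! ### Ranks of the total differential -/

section RankD

variable (S : Finset ℤ)

/-- The blocks of `D` that preserve `p` are the `∂̄`'s, and the others raise `p`. -/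
theorem tri2 (k : ℤ) :
    (∀ (i : S) x, tout A (k + 1) i (k - i + 1) (by omega) ((D A d1 d2 k ∘ₗ tins A S k i) x) =
      d2 i (k - i) x) ∧
    (∀ (r i : S) x, (r : ℤ) < i →
      tout A (k + 1) r (k - r + 1) (by omega) ((D A d1 d2 k ∘ₗ tins A S k i) x) = 0) := by
  constructor
  · intro i x
    rw [LinearMap.comp_apply, D_tin, map_add, tout_tin, tout_tin_of_ne, zero_add]
    omega
  · intro r i x h
    rw [LinearMap.comp_apply, D_tin, map_add, tout_tin_of_ne, tout_tin_of_ne, zero_add] <;> omega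

/-- The blocks of `D` that raise `p` are the `∂`'s, and the others preserve `p`. -/
theorem tri1 (k : ℤ) :
    (∀ (i : S) x, tout A (k + 1) (i + 1) (k - i) (by omega) ((D A d1 d2 k ∘ₗ tins A S k i) x) =
      d1 i (k - i) x) ∧
    (∀ (r i : S) x, -(r : ℤ) < -i →
      tout A (k + 1) (r + 1) (k - r) (by omega) ((D A d1 d2 k ∘ₗ tins A S k i) x) = 0) := by
  constructor
  · intro i x
    rw [LinearMap.comp_apply, D_tin, map_add, tout_tin, tout_tin_of_ne, add_zero]
    omega
  · intro r i x h
    rw [LinearMap.comp_apply, D_tin, map_add, tout_tin_of_ne, tout_tin_of_ne, zero_add] <;> omega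

theorem neg_coe_injective : Function.Injective fun i : S => -(i : ℤ) :=
  fun _ _ h => Subtype.ext (neg_injective h)

theorem sum_rk2_eq (k : ℤ) :
    ∑ p ∈ S, rk2 A d2 p (k - p) = ∑ i : S, finrank ℂ (range (d2 i (k - i))) :=
  (Finset.sum_coe_sort S fun p => rk2 A d2 p (k - p)).symm

theorem sum_rk1_eq (k : ℤ) :
    ∑ p ∈ S, rk1 A d1 p (k - p) = ∑ i : S, finrank ℂ (range (d1 i (k - i))) :=
  (Finset.sum_coe_sort S fun p => rk1 A d1 p (k - p)).symm

variable [∀ p q, FiniteDimensional ℂ (A p q)]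
  (hS : ∀ p q, p ∉ S → Subsingleton (A p q))

include hS

theorem finite_tot (k : ℤ) : FiniteDimensional ℂ (Tot A k) :=
  Module.Finite.of_surjective _ (tot_bijective A S hS k).2

theorem finrank_tot (k : ℤ) : finrank ℂ (Tot A k) = ∑ p ∈ S, finrank ℂ (A p (k - p)) := by
  rw [← (LinearEquiv.ofBijective _ (tot_bijective A S hS k)).finrank_eq, Module.finrank_pi_fintype]
  exact Finset.sum_coe_sort S fun p => finrank ℂ (A p (k - p))

/-- One half of the Frölicher inequality: passing to the associated graded map lowers the rank. -/
theorem sum_rk2_le (k : ℤ) :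
    ∑ p ∈ S, rk2 A d2 p (k - p) ≤ finrank ℂ (range (D A d1 d2 k)) := by
  rw [sum_rk2_eq A d2 S, ← range_D_eq A d1 d2 S hS k]
  have ht := tri2 A d1 d2 S k
  exact sum_rank_diag_le (fun i : S => (i : ℤ)) Subtype.val_injective _ _ _ ht.1 ht.2

theorem sum_rk1_le (k : ℤ) :
    ∑ p ∈ S, rk1 A d1 p (k - p) ≤ finrank ℂ (range (D A d1 d2 k)) := by
  rw [sum_rk1_eq A d1 S, ← range_D_eq A d1 d2 S hS k]
  have ht := tri1 A d1 d2 S k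
  exact sum_rank_diag_le (fun i : S => -(i : ℤ)) (neg_coe_injective S) _ _ _ ht.1 ht.2

/-- If `D` has the rank of `∂̄` in degree `k`, then `∂` maps `ker ∂̄` into `im ∂̄`
(the first differential of the spectral sequence vanishes). -/
theorem degen2 (k : ℤ)
    (heq : ∑ p ∈ S, rk2 A d2 p (k - p) = finrank ℂ (range (D A d1 d2 k)))
    (p q : ℤ) (hpq : p + (q + 1) = k) (x : A p (q + 1)) (hx : d2 p (q + 1) x = 0) :
    d1 p (q + 1) x ∈ range (d2 (p + 1) q) := by
  by_cases hp : p + 1 ∈ S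
  swap
  · have := hS (p + 1) (q + 1) hp
    rw [Subsingleton.elim (d1 p (q + 1) x) 0]
    exact zero_mem _
  rw [sum_rk2_eq A d2 S, ← range_D_eq A d1 d2 S hS k] at heq
  have ht := tri2 A d1 d2 S k
  have hu : D A d1 d2 k (tin A k p (q + 1) hpq x) =
      tin A (k + 1) (p + 1) (q + 1) (by omega) (d1 p (q + 1) x) := by
    rw [D_tin, hx, map_zero, add_zero]
  have key := leading_mem_of_rank_eq (fun i : S => (i : ℤ)) Subtype.val_injective _ _ _ ht.1 ht.2
    heq (D A d1 d2 k (tin A k p (q + 1) hpq x))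
    (by rw [range_D_eq A d1 d2 S hS k]; exact ⟨_, rfl⟩) ⟨p + 1, hp⟩
    (fun r hr => by
      rw [hu, tout_tin_of_ne]
      simp only at hr
      omega)
  rw [hu] at key
  obtain rfl : q = k - (p + 1) := by omega
  rw [tout_tin] at key
  exact key

/-- If `D` has the rank of `∂` in degree `k`, then `∂̄` maps `ker ∂` into `im ∂`. -/
theorem degen1 (hS' : ∀ p q, p ∉ S → Subsingleton (A (p + 1) q)) (k : ℤ)
    (heq : ∑ p ∈ S, rk1 A d1 p (k - p) = finrank ℂ (range (D A d1 d2 k)))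
    (p q : ℤ) (hpq : p + 1 + q = k) (x : A (p + 1) q) (hx : d1 (p + 1) q x = 0) :
    d2 (p + 1) q x ∈ range (d1 p (q + 1)) := by
  by_cases hp : p ∈ S
  swap
  · have := hS' p (q + 1) hp
    rw [Subsingleton.elim (d2 (p + 1) q x) 0]
    exact zero_mem _
  rw [sum_rk1_eq A d1 S, ← range_D_eq A d1 d2 S hS k] at heq
  have ht := tri1 A d1 d2 S k
  have hu : D A d1 d2 k (tin A k (p + 1) q hpq x) =
      tin A (k + 1) (p + 1) (q + 1) (by omega) (d2 (p + 1) q x) := by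
    rw [D_tin, hx, map_zero, zero_add]
  have key := leading_mem_of_rank_eq (fun i : S => -(i : ℤ)) (neg_coe_injective S) _ _ _ ht.1 ht.2
    heq (D A d1 d2 k (tin A k (p + 1) q hpq x))
    (by rw [range_D_eq A d1 d2 S hS k]; exact ⟨_, rfl⟩) ⟨p, hp⟩
    (fun r hr => by
      rw [hu, tout_tin_of_ne]
      simp only at hr
      omega)
  rw [hu] at key
  have aux : ∀ q' (h' : p + 1 + q' = k + 1), q' = k - p →
      tout A (k + 1) (p + 1) q' h'
        (tin A (k + 1) (p + 1) (q + 1) (by omega) (d2 (p + 1) q x)) ∈ range (d1 p q') := by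
    rintro q' h' rfl
    exact key
  have := aux (q + 1) (by omega) (by omega)
  rwa [tout_tin] at this

/-- Under the `∂∂̄`-Lemma, `D` has the rank of `∂̄`: a `∂̄`-closed `x` satisfies
`∂x = ∂∂̄u = -∂̄∂u`, so `Dx = -D(∂u)` with `∂u` in filtration degree one higher. -/
theorem rank_eq2
    (hd1 : ∀ p q (x : A p q), d1 (p+1) q (d1 p q x) = 0)
    (hc : ∀ p q (x : A p q), d1 p (q+1) (d2 p q x) + d2 (p+1) q (d1 p q x) = 0)
    (hL : ∀ p q (x : A p (q + 1)), d2 p (q + 1) x = 0 →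
      ∃ u : A p q, d1 p (q + 1) (d2 p q u) = d1 p (q + 1) x) (k : ℤ) :
    ∑ p ∈ S, rk2 A d2 p (k - p) = finrank ℂ (range (D A d1 d2 k)) := by
  rw [sum_rk2_eq A d2 S, ← range_D_eq A d1 d2 S hS k]
  have ht := tri2 A d1 d2 S k
  refine rank_eq_of_ker (fun i : S => (i : ℤ)) Subtype.val_injective _ _ _ ht.1 ht.2 ?_
  rintro ⟨p, hp⟩ x hx
  have main : ∀ q (h : p + q = k) (x : A p q), d2 p q x = 0 →
      ∃ q' h' y, D A d1 d2 k (tin A k p q h x) = D A d1 d2 k (tin A k (p + 1) q' h' y) := by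
    intro q h x hx
    obtain ⟨q, rfl⟩ : ∃ q', q = q' + 1 := ⟨q - 1, by ring⟩
    obtain ⟨u, hu⟩ := hL p q x hx
    refine ⟨q, by omega, -d1 p q u, ?_⟩
    rw [D_tin, D_tin, hx, ← hu, eq_neg_of_add_eq_zero_left (hc p q u), map_neg (d1 (p + 1) q), hd1]
    simp
  obtain ⟨q', h', y, hy⟩ := main (k - p) (by omega) x hx
  rcases tin_mem_tins A S hS k (p + 1) q' h' y with ⟨hp1, z, hz⟩ | h0
  · right
    refine ⟨⟨p + 1, hp1⟩, z, by simp, ?_⟩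
    rw [LinearMap.comp_apply, LinearMap.comp_apply, hy, hz]
  · left
    rw [LinearMap.comp_apply, hy, h0, map_zero]

/-- Under the `∂∂̄`-Lemma, `D` has the rank of `∂`: a `∂`-closed `x` satisfies `∂̄x = ∂∂̄u`,
so `Dx = D(∂̄u)` with `∂̄u` in filtration degree one lower. -/
theorem rank_eq1
    (hd2 : ∀ p q (x : A p q), d2 p (q+1) (d2 p q x) = 0)
    (hL : ∀ p q (x : A (p + 1) q), d1 (p + 1) q x = 0 →
      ∃ u : A p q, d1 p (q + 1) (d2 p q u) = d2 (p + 1) q x) (k : ℤ) :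
    ∑ p ∈ S, rk1 A d1 p (k - p) = finrank ℂ (range (D A d1 d2 k)) := by
  rw [sum_rk1_eq A d1 S, ← range_D_eq A d1 d2 S hS k]
  have ht := tri1 A d1 d2 S k
  refine rank_eq_of_ker (fun i : S => -(i : ℤ)) (neg_coe_injective S) _ _ _ ht.1 ht.2 ?_
  rintro ⟨p, hp⟩ x hx
  have main : ∀ p q (h : p + q = k) (x : A p q), d1 p q x = 0 →
      ∃ p' q' h' y, p' < p ∧
        D A d1 d2 k (tin A k p q h x) = D A d1 d2 k (tin A k p' q' h' y) := by
    intro p q h x hx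
    obtain ⟨p, rfl⟩ : ∃ p', p = p' + 1 := ⟨p - 1, by ring⟩
    obtain ⟨u, hu⟩ := hL p q x hx
    refine ⟨p, q + 1, by omega, d2 p q u, by omega, ?_⟩
    rw [D_tin, D_tin, hx, ← hu, hd2]
    simp
  obtain ⟨p', q', h', y, hlt, hy⟩ := main p (k - p) (by omega) x hx
  rcases tin_mem_tins A S hS k p' q' h' y with ⟨hp1, z, hz⟩ | h0
  · right
    refine ⟨⟨p', hp1⟩, z, by simpa using hlt, ?_⟩
    rw [LinearMap.comp_apply, LinearMap.comp_apply, hy, hz]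
  · left
    rw [LinearMap.comp_apply, hy, h0, map_zero]

theorem finrank_HdR
    (hd1 : ∀ p q (x : A p q), d1 (p+1) q (d1 p q x) = 0)
    (hd2 : ∀ p q (x : A p q), d2 p (q+1) (d2 p q x) = 0)
    (hc : ∀ p q (x : A p q), d1 p (q+1) (d2 p q x) + d2 (p+1) q (d1 p q x) = 0) (k : ℤ) :
    finrank ℂ (HdR A d1 d2 k) + finrank ℂ (range (D A d1 d2 k)) +
      finrank ℂ (range (D A d1 d2 (k + 1))) = ∑ p ∈ S, finrank ℂ (A p (k + 1 - p)) := by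
  have := finite_tot A S hS
  rw [← finrank_tot A S hS, ← (D A d1 d2 (k + 1)).finrank_range_add_finrank_ker,
    finrank_quot_comap, add_comm]
  rintro _ ⟨t, rfl⟩
  rw [LinearMap.mem_ker]
  refine (Submodule.mem_bot ℂ).mp (tot_hom_mem A k (D A d1 d2 (k + 1) ∘ₗ D A d1 d2 k) ⊥ ?_ t)
  intro p q h x
  rw [Submodule.mem_bot, LinearMap.comp_apply, D_tin, map_add, D_tin, D_tin, hd1, hd2, map_zero,
    map_zero, zero_add, add_zero, ← map_add,
    add_comm (d2 _ _ _), hc, map_zero]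

end RankD

/-! ### Dimensions of Bott–Chern and Aeppli cohomology -/

section Bidegree

theorem kerSup_le
    (hc : ∀ p q (x : A p q), d1 p (q+1) (d2 p q x) + d2 (p+1) q (d1 p q x) = 0) (p q : ℤ) :
    ker (d1 p q) ⊔ ker (d2 p q) ≤ ker (ddb A d1 d2 p q) := by
  refine sup_le ?_ ?_ <;> intro x hx <;> rw [LinearMap.mem_ker] at hx
  · change d1 _ _ (d2 _ _ x) = 0
    rw [eq_neg_of_add_eq_zero_left (hc p q x), hx, map_zero, neg_zero]
  · change d1 _ _ (d2 _ _ x) = 0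
    rw [hx, map_zero]

theorem im_le_imInf
    (hc : ∀ p q (x : A p q), d1 p (q+1) (d2 p q x) + d2 (p+1) q (d1 p q x) = 0) (p q : ℤ) :
    range (ddb A d1 d2 p q) ≤ range (d1 p (q + 1)) ⊓ range (d2 (p + 1) q) := by
  rintro _ ⟨x, rfl⟩
  refine ⟨⟨d2 p q x, rfl⟩, ⟨-d1 p q x, ?_⟩⟩
  rw [map_neg]
  exact (eq_neg_of_add_eq_zero_left (hc p q x)).symm

variable [∀ p q, FiniteDimensional ℂ (A p q)]

/-- The dimension of `ker ∂∂̄` at bidegree `(p+1, q+1)`. -/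
noncomputable def dimKer (p q : ℤ) : ℕ := finrank ℂ (ker (ddb A d1 d2 (p + 1) (q + 1)))

/-- The dimension of `ker ∂ + ker ∂̄` at bidegree `(p+1, q+1)`. -/
noncomputable def dimKerSup (p q : ℤ) : ℕ :=
  finrank ℂ ↥(ker (d1 (p + 1) (q + 1)) ⊔ ker (d2 (p + 1) (q + 1)))

/-- The dimension of `im ∂ ∩ im ∂̄` at bidegree `(p+1, q+1)`. -/
noncomputable def dimImInf (p q : ℤ) : ℕ := finrank ℂ ↥(range (d1 p (q + 1)) ⊓ range (d2 (p + 1) q))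

/-- The dimension of `im ∂∂̄` at bidegree `(p+1, q+1)`. -/
noncomputable def dimIm (p q : ℤ) : ℕ := finrank ℂ (range (ddb A d1 d2 p q))

/-- Uses `im ∂∂̄ ⊆ ker ∂ ∩ ker ∂̄` and the modular identity for the two kernels. -/
theorem finrank_HBC
    (hd1 : ∀ p q (x : A p q), d1 (p+1) q (d1 p q x) = 0)
    (hd2 : ∀ p q (x : A p q), d2 p (q+1) (d2 p q x) = 0)
    (hc : ∀ p q (x : A p q), d1 p (q+1) (d2 p q x) + d2 (p+1) q (d1 p q x) = 0) (p q : ℤ) :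
    finrank ℂ (HBC A d1 d2 p q) + dimIm A d1 d2 p q + dimKerSup A d1 d2 p q +
      rk1 A d1 (p + 1) (q + 1) + rk2 A d2 (p + 1) (q + 1) = 2 * finrank ℂ (A (p + 1) (q + 1)) := by
  have h1 : finrank ℂ (HBC A d1 d2 p q) + _ = _ := finrank_quot_comap (ker (d1 (p+1) (q+1)) ⊓ ker (d2 (p+1) (q+1)))
    (range (ddb A d1 d2 p q)) (by
      rintro _ ⟨x, rfl⟩
      refine ⟨hd1 _ _ _, ?_⟩
      change d2 _ _ (d1 _ _ (d2 _ _ x)) = 0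
      rw [eq_neg_of_add_eq_zero_right (hc p (q + 1) (d2 p q x)), hd2]
      simp)
  have h2 := Submodule.finrank_sup_add_finrank_inf_eq
    (ker (d1 (p+1) (q+1))) (ker (d2 (p+1) (q+1)))
  have h3 := (d1 (p+1) (q+1)).finrank_range_add_finrank_ker
  have h4 := (d2 (p+1) (q+1)).finrank_range_add_finrank_ker
  simp only [dimIm, dimKerSup, rk1, rk2]
  omega

/-- Uses `im ∂ + im ∂̄ ⊆ ker ∂∂̄` and the modular identity for the two images. -/
theorem finrank_HA
    (hd1 : ∀ p q (x : A p q), d1 (p+1) q (d1 p q x) = 0)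
    (hd2 : ∀ p q (x : A p q), d2 p (q+1) (d2 p q x) = 0)
    (hc : ∀ p q (x : A p q), d1 p (q+1) (d2 p q x) + d2 (p+1) q (d1 p q x) = 0) (p q : ℤ) :
    finrank ℂ (HA A d1 d2 p q) + rk1 A d1 p (q + 1) + rk2 A d2 (p + 1) q =
      dimKer A d1 d2 p q + dimImInf A d1 d2 p q := by
  have h1 : finrank ℂ (HA A d1 d2 p q) + _ = _ := finrank_quot_comap (ker (ddb A d1 d2 (p+1) (q+1)))
    (range (d1 p (q+1)) ⊔ range (d2 (p+1) q)) (by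
      refine sup_le ?_ ?_
      · rintro _ ⟨x, rfl⟩
        change d1 _ _ (d2 _ _ (d1 _ _ x)) = 0
        rw [eq_neg_of_add_eq_zero_right (hc p (q + 1) x), map_neg, hd1, neg_zero]
      · rintro _ ⟨x, rfl⟩
        change d1 _ _ (d2 _ _ (d2 _ _ x)) = 0
        rw [hd2, map_zero])
  have h2 := Submodule.finrank_sup_add_finrank_inf_eq (range (d1 p (q+1))) (range (d2 (p+1) q))
  simp only [dimKer, dimImInf, rk1, rk2]
  omega

end Bidegree

/-! ### The equivalence -/

theorem sum_shift (m n : ℤ) (f : ℤ → ℕ) (hf : ∀ p, p < m ∨ n < p → f p = 0) :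
    ∑ p ∈ Finset.Icc (m - 2) (n + 2), f (p + 1) = ∑ p ∈ Finset.Icc (m - 2) (n + 2), f p := by
  rw [← finsum_eq_sum_of_support_subset, ← finsum_eq_sum_of_support_subset]
  · exact finsum_comp_equiv (Equiv.addRight (1 : ℤ)) (f := f)
  all_goals
    intro p hp
    rw [Function.mem_support] at hp
    by_contra h
    apply hp
    apply hf
    rw [Finset.coe_Icc, Set.mem_Icc] at h
    omega

/-- the `∂∂̄`-Lemma holds iff `h^k_BC + h^k_A = 2 b_k` for all `k`. -/
theorem stmt7
    [∀ p q, FiniteDimensional ℂ (A p q)]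
    (m n : ℤ)
    (hbd : ∀ p q : ℤ, (p < m ∨ n < p ∨ q < m ∨ n < q) → Subsingleton (A p q))
    (hd1 : ∀ p q (x : A p q), d1 (p+1) q (d1 p q x) = 0)
    (hd2 : ∀ p q (x : A p q), d2 p (q+1) (d2 p q x) = 0)
    (hc : ∀ p q (x : A p q), d1 p (q+1) (d2 p q x) + d2 (p+1) q (d1 p q x) = 0)
    :
    (∀ p q : ℤ,
      (ker (d1 (p+1) (q+1)) ⊓ ker (d2 (p+1) (q+1))) ⊓
        (range (d1 p (q+1)) ⊔ range (d2 (p+1) q)) = range (ddb A d1 d2 p q)) ↔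
    (∀ k : ℤ,
      (∑ p ∈ Finset.Icc (m - 2) (n + 2), finrank ℂ (HBC A d1 d2 p (k + 1 - p - 2))) +
      (∑ p ∈ Finset.Icc (m - 2) (n + 2), finrank ℂ (HA A d1 d2 p (k + 1 - p - 2))) = 2 * finrank ℂ (HdR A d1 d2 k)) := by
  have hSm : ∀ p, p ∉ Finset.Icc (m - 2) (n + 2) → p + 1 < m ∨ n < p := by
    intro p hp
    rw [Finset.mem_Icc] at hp
    omega
  have hS : ∀ p q, p ∉ Finset.Icc (m - 2) (n + 2) → Subsingleton (A p q) := fun p q hp =>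
    hbd p q (by have := hSm p hp; omega)
  have hS' : ∀ p q, p ∉ Finset.Icc (m - 2) (n + 2) → Subsingleton (A (p + 1) q) := fun p q hp =>
    hbd (p + 1) q (by have := hSm p hp; omega)
  -- The margin in `S` makes every sum over `S` insensitive to the shift `p ↦ p + 1`.
  set S := Finset.Icc (m - 2) (n + 2) with hSdef
  have hBCsum : ∀ k : ℤ, ∑ p ∈ S, finrank ℂ (HBC A d1 d2 p (k + 1 - p - 2)) +
      ∑ p ∈ S, dimIm A d1 d2 p (k + 1 - p - 2) + ∑ p ∈ S, dimKerSup A d1 d2 p (k + 1 - p - 2) +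
      ∑ p ∈ S, rk1 A d1 p (k + 1 - p) + ∑ p ∈ S, rk2 A d2 p (k + 1 - p) =
      2 * ∑ p ∈ S, finrank ℂ (A p (k + 1 - p)) := by
    intro k
    have hz : ∀ p, p < m ∨ n < p → Subsingleton (A p (k + 1 - p)) := fun p hp =>
      hbd _ _ (by omega)
    rw [← sum_shift m n (fun p => rk1 A d1 p (k + 1 - p)),
      ← sum_shift m n (fun p => rk2 A d2 p (k + 1 - p)),
      ← sum_shift m n (fun p => finrank ℂ (A p (k + 1 - p))), Finset.mul_sum,
      ← Finset.sum_add_distrib, ← Finset.sum_add_distrib, ← Finset.sum_add_distrib,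
      ← Finset.sum_add_distrib]
    · refine Finset.sum_congr rfl fun p _ => ?_
      have := finrank_HBC A d1 d2 hd1 hd2 hc p (k + 1 - p - 2)
      rwa [show k + 1 - (p + 1) = k + 1 - p - 2 + 1 by ring]
    · intro p hp
      have := hz p hp
      exact Module.finrank_zero_of_subsingleton
    · intro p hp
      have := hz p hp
      exact Nat.le_zero.mp ((LinearMap.finrank_range_le _).trans
        Module.finrank_zero_of_subsingleton.le)
    · intro p hp
      have := hz p hp
      exact Nat.le_zero.mp ((LinearMap.finrank_range_le _).trans
        Module.finrank_zero_of_subsingleton.le)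
  have hAsum : ∀ k : ℤ, ∑ p ∈ S, finrank ℂ (HA A d1 d2 p (k + 1 - p - 2)) +
      ∑ p ∈ S, rk1 A d1 p (k - p) + ∑ p ∈ S, rk2 A d2 p (k - p) =
      ∑ p ∈ S, dimKer A d1 d2 p (k + 1 - p - 2) + ∑ p ∈ S, dimImInf A d1 d2 p (k + 1 - p - 2) := by
    intro k
    have hz : ∀ p, p < m ∨ n < p → Subsingleton (A p (k - p)) := fun p hp =>
      hbd _ _ (by omega)
    rw [← sum_shift m n (fun p => rk2 A d2 p (k - p)),
      ← Finset.sum_add_distrib, ← Finset.sum_add_distrib, ← Finset.sum_add_distrib]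
    · refine Finset.sum_congr rfl fun p _ => ?_
      have := finrank_HA A d1 d2 hd1 hd2 hc p (k + 1 - p - 2)
      rw [← this, show k - p = k + 1 - p - 2 + 1 by ring, show k - (p + 1) = k + 1 - p - 2 by ring]
    · intro p hp
      have := hz p hp
      exact Nat.le_zero.mp ((LinearMap.finrank_range_le _).trans
        Module.finrank_zero_of_subsingleton.le)
  have hdR := finrank_HdR A d1 d2 S hS hd1 hd2 hc
  constructor
  · intro hL
    have hmem : ∀ p q (z : A (p + 1) (q + 1)), d1 _ _ z = 0 → d2 _ _ z = 0 →
        z ∈ range (d1 p (q+1)) ⊔ range (d2 (p+1) q) → ∃ u, d1 p (q + 1) (d2 p q u) = z := by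
      intro p q z h1 h2 h3
      have : z ∈ range (ddb A d1 d2 p q) := by
        rw [← hL p q]
        exact ⟨⟨h1, h2⟩, h3⟩
      exact this
    have hr2 := rank_eq2 A d1 d2 S hS hd1 hc (by
      intro p q x hx
      refine hmem p q _ (hd1 _ _ _) ?_ (Submodule.mem_sup_left ⟨x, rfl⟩)
      rw [eq_neg_of_add_eq_zero_right (hc p (q + 1) x), hx, map_zero, neg_zero])
    have hr1 := rank_eq1 A d1 d2 S hS hd2 (by
      intro p q x hx
      refine hmem p q _ ?_ (hd2 _ _ _) (Submodule.mem_sup_right ⟨x, rfl⟩)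
      rw [eq_neg_of_add_eq_zero_left (hc (p + 1) q x), hx, map_zero, neg_zero])
    have hK : ∀ p q, dimKerSup A d1 d2 p q = dimKer A d1 d2 p q := by
      intro p q
      suffices h : ker (d1 (p + 1) (q + 1)) ⊔ ker (d2 (p + 1) (q + 1)) =
          ker (ddb A d1 d2 (p + 1) (q + 1)) by rw [dimKerSup, dimKer, h]
      refine le_antisymm (kerSup_le A d1 d2 hc _ _) ?_
      intro x hx
      obtain ⟨u, hu⟩ := hmem p (q + 1) (d2 (p + 1) (q + 1) x) hx (hd2 _ _ _)
        (Submodule.mem_sup_right ⟨x, rfl⟩)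
      refine Submodule.mem_sup.mpr ⟨-d1 p (q + 1) u, ?_, x + d1 p (q + 1) u, ?_, by abel⟩
      · rw [LinearMap.mem_ker, map_neg, hd1, neg_zero]
      · rw [LinearMap.mem_ker, map_add, ← hu, hc]
    have hI : ∀ p q, dimIm A d1 d2 p q = dimImInf A d1 d2 p q := by
      intro p q
      suffices h : range (ddb A d1 d2 p q) = range (d1 p (q + 1)) ⊓ range (d2 (p + 1) q) by
        rw [dimIm, dimImInf, h]
      refine le_antisymm (im_le_imInf A d1 d2 hc p q) ?_
      rintro z ⟨⟨x, hx⟩, ⟨y, hy⟩⟩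
      exact hmem p q z (by rw [← hx, hd1]) (by rw [← hy, hd2]) (Submodule.mem_sup_left ⟨x, hx⟩)
    intro k
    have a1 := hBCsum k
    have a2 := hAsum k
    have a3 := hdR k
    simp only [hK, hI, hr1, hr2] at a1 a2
    omega
  · intro hEq
    have hKle : ∀ k, ∀ p ∈ S, dimKerSup A d1 d2 p (k + 1 - p - 2) ≤
        dimKer A d1 d2 p (k + 1 - p - 2) := fun k p _ =>
      Submodule.finrank_mono (kerSup_le A d1 d2 hc _ _)
    have hIle : ∀ k, ∀ p ∈ S, dimIm A d1 d2 p (k + 1 - p - 2) ≤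
        dimImInf A d1 d2 p (k + 1 - p - 2) := fun k p _ =>
      Submodule.finrank_mono (im_le_imInf A d1 d2 hc _ _)
    have hall : ∀ k,
        (∑ p ∈ S, rk1 A d1 p (k - p) = finrank ℂ (range (D A d1 d2 k))) ∧
        (∑ p ∈ S, rk2 A d2 p (k - p) = finrank ℂ (range (D A d1 d2 k))) ∧
        (∑ p ∈ S, dimKerSup A d1 d2 p (k + 1 - p - 2) =
          ∑ p ∈ S, dimKer A d1 d2 p (k + 1 - p - 2)) ∧
        (∑ p ∈ S, dimIm A d1 d2 p (k + 1 - p - 2) =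
          ∑ p ∈ S, dimImInf A d1 d2 p (k + 1 - p - 2)) := by
      intro k
      have a1 := hBCsum k
      have a2 := hAsum k
      have a3 := hdR k
      have a4 := hEq k
      have b1 := sum_rk1_le A d1 d2 S hS k
      have b2 := sum_rk2_le A d1 d2 S hS k
      have b3 := sum_rk1_le A d1 d2 S hS (k + 1)
      have b4 := sum_rk2_le A d1 d2 S hS (k + 1)
      have b5 := Finset.sum_le_sum (hKle k)
      have b6 := Finset.sum_le_sum (hIle k)
      -- `a1 + a2 - 2 * a3` writes the excess `h_BC + h_A - 2 b` as a sum of the slacks in `b1`–`b6`.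
      omega
    have hK : ∀ p q, ker (ddb A d1 d2 p q) ≤ ker (d1 p q) ⊔ ker (d2 p q) := by
      intro p q
      obtain ⟨p, rfl⟩ : ∃ p', p = p' + 1 := ⟨p - 1, by ring⟩
      obtain ⟨q, rfl⟩ : ∃ q', q = q' + 1 := ⟨q - 1, by ring⟩
      by_cases hp : p ∈ S
      · have h := (Finset.sum_eq_sum_iff_of_le (hKle (p + q + 1))).mp (hall _).2.2.1 p hp
        rw [show p + q + 1 + 1 - p - 2 = q by ring] at h
        exact (Submodule.eq_of_le_of_finrank_eq (kerSup_le A d1 d2 hc _ _) h).ge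
      · have := hS' p (q + 1) hp
        intro x _
        rw [Subsingleton.elim x 0]
        exact zero_mem _
    have hI : ∀ p q, range (d1 p (q + 1)) ⊓ range (d2 (p + 1) q) ≤ range (ddb A d1 d2 p q) := by
      intro p q
      by_cases hp : p ∈ S
      · have h := (Finset.sum_eq_sum_iff_of_le (hIle (p + q + 1))).mp (hall _).2.2.2 p hp
        rw [show p + q + 1 + 1 - p - 2 = q by ring] at h
        exact (Submodule.eq_of_le_of_finrank_eq (im_le_imInf A d1 d2 hc _ _) h).ge
      · have := hS' p (q + 1) hp
        intro x _
        rw [Subsingleton.elim x 0]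
        exact zero_mem _
    intro p q
    apply le_antisymm
    · rintro z ⟨⟨hz1, hz2⟩, hz⟩
      obtain ⟨_, ⟨x, rfl⟩, _, ⟨y, rfl⟩, rfl⟩ := Submodule.mem_sup.mp hz
      rw [SetLike.mem_coe, LinearMap.mem_ker, map_add] at hz1 hz2
      rw [hd1, zero_add] at hz1
      rw [hd2, add_zero] at hz2
      have hx : x ∈ ker (ddb A d1 d2 p (q + 1)) := by
        change d1 _ _ (d2 _ _ x) = 0
        rw [eq_neg_of_add_eq_zero_left (hc p (q + 1) x), hz2, neg_zero]
      obtain ⟨x1, hx1, x2, hx2, rfl⟩ := Submodule.mem_sup.mp (hK _ _ hx)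
      obtain ⟨y1, hy1, y2, hy2, rfl⟩ := Submodule.mem_sup.mp
        (hK (p + 1) q (show y ∈ ker (ddb A d1 d2 (p + 1) q) from hz1))
      rw [LinearMap.mem_ker] at hx1 hx2 hy1 hy2
      -- Now `z = ∂x₂ + ∂̄y₁` with `∂̄x₂ = 0 = ∂y₁`, and each term lies in `im ∂ ∩ im ∂̄`.
      rw [map_add, map_add, hx1, hy2, zero_add, add_zero]
      refine Submodule.add_mem _ (hI p q ⟨⟨x2, rfl⟩, ?_⟩) (hI p q ⟨?_, ⟨y1, rfl⟩⟩)
      · exact degen2 A d1 d2 S hS _ (hall (p + (q + 1))).2.1 p q rfl x2 hx2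
      · exact degen1 A d1 d2 S hS hS' _ (hall (p + 1 + q)).1 p q rfl y1 hy1
    · intro z hz
      have h := im_le_imInf A d1 d2 hc p q hz
      obtain ⟨⟨x, hx⟩, ⟨y, hy⟩⟩ := h
      refine ⟨⟨?_, ?_⟩, Submodule.mem_sup_left ⟨x, hx⟩⟩
      · rw [SetLike.mem_coe, LinearMap.mem_ker, ← hx, hd1]
      · rw [SetLike.mem_coe, LinearMap.mem_ker, ← hy, hd2]
end

section
/- Let (A^{•,•}, ∂, ∂̄) be a bounded double complex of finite-dimensional ℂ-vector spaces that is a direct sum of squares and zigzags. If no zigzag summand of length ≥ 2 occurs, then for every (p,q) the natural maps H_BC^{p,q} → H_∂̄^{p,q} → H_A^{p,q} induced by the identity are all isomorphisms. -/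
/-!
Each summand is a square or a dot, so a homogeneous element `x` of a summand is of one of four
kinds (`piece_cases`): it lies in the source corner of a square, where `∂∂̄` is injective; or it
is `∂`-exact; or it is `∂̄`-exact; or it is killed by both differentials.

On a single summand this gives four facts, which together say that the two natural maps are
bijective:
* `∂∂̄ x = 0` implies `∂̄ x ∈ im ∂∂̄` (injectivity of `H_BC → H_∂̄`);
* `∂̄ x = 0` implies `x ∈ ker ∂ + im ∂̄` (surjectivity of `H_BC → H_∂̄`);
* `∂∂̄ x = 0` implies `∂ x ∈ im ∂̄` (injectivity of `H_∂̄ → H_A`);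
* `∂∂̄ x = 0` implies `x ∈ ker ∂̄ + im ∂ + im ∂̄` (surjectivity of `H_∂̄ → H_A`).

All four have the shape "`f x = 0` implies `x ∈ N`" for a linear map `f` respecting the
decomposition and a submodule `N`. The kernel of such an `f` is the sum of its intersections with
the summands, so they pass from the summands to the whole complex (`ker_le_of_pieces`).
-/

open LinearMap Submodule Module

variable (A : ℤ → ℤ → Type) [∀ p q, AddCommGroup (A p q)] [∀ p q, Module ℂ (A p q)]
variable (d1 : ∀ p q, A p q →ₗ[ℂ] A (p + 1) q)
variable (d2 : ∀ p q, A p q →ₗ[ℂ] A p (q + 1))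

variable (hcomm : ∀ p q (x : A p q), d1 p (q+1) (d2 p q x) + d2 (p+1) q (d1 p q x) = 0)

/-- A family of submodules closed under both differentials (a sub-double-complex). -/
def IsSubcomplex (S : ∀ p q : ℤ, Submodule ℂ (A p q)) : Prop :=
  ∀ p q : ℤ, (S p q).map (d1 p q) ≤ S (p + 1) q ∧ (S p q).map (d2 p q) ≤ S p (q + 1)

/-- A square: four one-dimensional components in bidegrees `(a,b)`, `(a+1,b)`,
`(a,b+1)`, `(a+1,b+1)`, with all four connecting maps isomorphisms. -/
def IsSquareComplex (S : ∀ p q : ℤ, Submodule ℂ (A p q)) : Prop :=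
  ∃ a b : ℤ, finrank ℂ (S a b) = 1 ∧
    (∀ r s : ℤ, ¬ ((r = a ∨ r = a + 1) ∧ (s = b ∨ s = b + 1)) → S r s = ⊥) ∧
    (S a b).map (d1 a b) = S (a + 1) b ∧ Disjoint (S a b) (ker (d1 a b)) ∧
    (S a b).map (d2 a b) = S a (b + 1) ∧ Disjoint (S a b) (ker (d2 a b)) ∧
    (S (a + 1) b).map (d2 (a + 1) b) = S (a + 1) (b + 1) ∧
      Disjoint (S (a + 1) b) (ker (d2 (a + 1) b)) ∧
    (S a (b + 1)).map (d1 a (b + 1)) = S (a + 1) (b + 1) ∧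
      Disjoint (S a (b + 1)) (ker (d1 a (b + 1)))

/-- A dot (zigzag of length one): a single one-dimensional component with zero
differentials. -/
def IsDot (S : ∀ p q : ℤ, Submodule ℂ (A p q)) : Prop :=
  ∃ a b : ℤ, finrank ℂ (S a b) = 1 ∧
    (∀ r s : ℤ, ¬ (r = a ∧ s = b) → S r s = ⊥) ∧
    (S a b).map (d1 a b) = ⊥ ∧ (S a b).map (d2 a b) = ⊥

/-- A zigzag: a nonzero indecomposable sub-double-complex with components of
dimension at most one, finite support, and vanishing `∂∂̄` (which excludes squares);
such indecomposables are exactly the staircase-shaped complexes. -/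
def IsZigzag (S : ∀ p q : ℤ, Submodule ℂ (A p q)) : Prop :=
  (∃ p q : ℤ, S p q ≠ ⊥) ∧
  (∀ p q : ℤ, finrank ℂ (S p q) ≤ 1) ∧
  (Set.Finite {pq : ℤ × ℤ | S pq.1 pq.2 ≠ ⊥}) ∧
  (∀ p q : ℤ, (S p q).map (ddb A d1 d2 p q) = ⊥) ∧
  (∀ T T' : ∀ p q : ℤ, Submodule ℂ (A p q),
    IsSubcomplex A d1 d2 T → IsSubcomplex A d1 d2 T' →
    (∀ p q, T p q ⊔ T' p q = S p q) → (∀ p q, Disjoint (T p q) (T' p q)) →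
    (∀ p q, T p q = ⊥) ∨ (∀ p q, T' p q = ⊥))

/-- `S : ι → ⋯` realizes the double complex `A` as an (internal) direct sum of the
sub-double-complexes `S i`. -/
def IsDecomposition (ι : Type) (S : ι → ∀ p q : ℤ, Submodule ℂ (A p q)) : Prop :=
  (∀ i, IsSubcomplex A d1 d2 (S i)) ∧
  (∀ p q : ℤ, (⨆ i, S i p q) = ⊤) ∧
  (∀ p q : ℤ, ∀ i, Disjoint (S i p q) (⨆ j, ⨆ _ : j ≠ i, S j p q))

/-- If `f` carries a spanning family `S` into an independent family `T`, then `ker f` is contained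
in every submodule containing all the `S i ⊓ ker f`. -/
theorem ker_le_of_pieces {V W : Type} [AddCommGroup V] [Module ℂ V] [AddCommGroup W] [Module ℂ W]
    {ι : Type} (S : ι → Submodule ℂ V) (T : ι → Submodule ℂ W) (f : V →ₗ[ℂ] W)
    (hS : (⨆ i, S i) = ⊤) (hT : ∀ i, Disjoint (T i) (⨆ j, ⨆ _ : j ≠ i, T j))
    (hf : ∀ i, ∀ x ∈ S i, f x ∈ T i) (N : Submodule ℂ V)
    (hN : ∀ i, ∀ x ∈ S i, f x = 0 → x ∈ N) (x : V) (hx : f x = 0) : x ∈ N := by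
  obtain ⟨g, hg, rfl⟩ := (Submodule.mem_iSup_iff_exists_finsupp S x).1 (hS ▸ Submodule.mem_top)
  have hind : iSupIndep T := hT
  have h0 := (iSupIndep_iff_finsetSum_eq_zero_imp_eq_zero T).1 hind g.support
    (fun i => f (g i)) (fun i _ => hf i _ (hg i)) (by simpa [Finsupp.sum, map_sum] using hx)
  exact Submodule.sum_mem _ fun i hi => hN i _ (hg i) (h0 i hi)

/-- The four kinds of elements of a summand: source corner of a square, `∂`-exact, `∂̄`-exact, or
killed by both differentials. -/
theorem piece_cases (S : ∀ p q : ℤ, Submodule ℂ (A p q))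
    (hS : IsSquareComplex A d1 d2 S ∨ IsDot A d1 d2 S) (p q : ℤ) (x : A (p + 1) (q + 1))
    (hx : x ∈ S (p + 1) (q + 1)) :
    (ddb A d1 d2 _ _ x = 0 → x = 0) ∨ (∃ w, d1 p (q + 1) w = x) ∨ (∃ w, d2 (p + 1) q w = x) ∨
      (d1 _ _ x = 0 ∧ d2 _ _ x = 0) := by
  rcases hS with ⟨a, b, -, hz, h1, -, h2, k2, h3, -, h4, k4⟩ | ⟨a, b, -, hz, h1, h2⟩
  · by_cases hc : (p + 1 = a ∨ p + 1 = a + 1) ∧ (q + 1 = b ∨ q + 1 = b + 1)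
    · obtain ⟨hp | hp, hq | hq⟩ := hc
      · subst hp hq
        refine Or.inl fun h => ?_
        rw [Submodule.disjoint_def] at k2 k4
        exact k2 x hx (k4 _ (h2 ▸ Submodule.mem_map_of_mem hx) h)
      · obtain rfl : q = b := by omega
        subst hp
        rw [← h2] at hx
        obtain ⟨w, -, hw⟩ := hx
        exact Or.inr (Or.inr (Or.inl ⟨w, hw⟩))
      · obtain rfl : p = a := by omega
        subst hq
        rw [← h1] at hx
        obtain ⟨w, -, hw⟩ := hx
        exact Or.inr (Or.inl ⟨w, hw⟩)
      · obtain rfl : p = a := by omega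
        obtain rfl : q = b := by omega
        rw [← h3] at hx
        obtain ⟨w, -, hw⟩ := hx
        exact Or.inr (Or.inr (Or.inl ⟨w, hw⟩))
    · rw [hz _ _ hc, Submodule.mem_bot] at hx
      exact Or.inl fun _ => hx
  · by_cases hc : p + 1 = a ∧ q + 1 = b
    · obtain ⟨rfl, rfl⟩ := hc
      refine Or.inr (Or.inr (Or.inr ⟨?_, ?_⟩))
      · simpa [h1] using Submodule.mem_map_of_mem (f := d1 (p + 1) (q + 1)) hx
      · simpa [h2] using Submodule.mem_map_of_mem (f := d2 (p + 1) (q + 1)) hx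
    · rw [hz _ _ hc, Submodule.mem_bot] at hx
      exact Or.inl fun _ => hx

/-- if the complex is a direct sum of squares and zigzags with no
zigzag of length at least two, then `H_BC → H_∂̄ → H_A` are isomorphisms. -/
theorem stmt16
    [∀ p q, FiniteDimensional ℂ (A p q)]
    (m n : ℤ)
    (hbd : ∀ p q : ℤ, (p < m ∨ n < p ∨ q < m ∨ n < q) → Subsingleton (A p q))
    (hd1 : ∀ p q (x : A p q), d1 (p+1) q (d1 p q x) = 0)
    (hd2 : ∀ p q (x : A p q), d2 p (q+1) (d2 p q x) = 0)
    (ι : Type) (S : ι → ∀ p q : ℤ, Submodule ℂ (A p q))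
    (hdec : IsDecomposition A d1 d2 ι S)
    (hsz : ∀ i, IsSquareComplex A d1 d2 (S i) ∨ IsZigzag A d1 d2 (S i))
    (hnolong : ∀ i, IsZigzag A d1 d2 (S i) → IsDot A d1 d2 (S i)) :
    ∀ p q : ℤ, Function.Bijective (iBCdb A d1 d2 hcomm p q) ∧
      Function.Bijective (idbA A d1 d2 p q) := by
  obtain ⟨hsub, htop, hdis⟩ := hdec
  have hpiece : ∀ i, IsSquareComplex A d1 d2 (S i) ∨ IsDot A d1 d2 (S i) := fun i =>
    (hsz i).imp_right (hnolong i)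
  have m1 : ∀ i p q, ∀ x ∈ S i p q, d1 p q x ∈ S i (p + 1) q := fun i p q x hx =>
    (hsub i p q).1 (Submodule.mem_map_of_mem hx)
  have m2 : ∀ i p q, ∀ x ∈ S i p q, d2 p q x ∈ S i p (q + 1) := fun i p q x hx =>
    (hsub i p q).2 (Submodule.mem_map_of_mem hx)
  have m12 : ∀ i p q, ∀ x ∈ S i p q, ddb A d1 d2 p q x ∈ S i (p + 1) (q + 1) :=
    fun i p q x hx => m1 _ _ _ _ (m2 _ _ _ _ hx)
  have tri := fun i => piece_cases A d1 d2 (S i) (hpiece i)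
  have key1 : ∀ p q (z : A (p + 1) q), ddb A d1 d2 _ _ z = 0 →
      d2 _ _ z ∈ range (ddb A d1 d2 p q) := by
    intro p q
    -- Writing `q` as a successor brings the bidegree into the form of `piece_cases`.
    obtain ⟨q, rfl⟩ : ∃ q', q = q' + 1 := ⟨q - 1, by ring⟩
    refine ker_le_of_pieces _ _ (ddb A d1 d2 _ _) (htop _ _) (hdis _ _) (fun i => m12 i _ _)
      ((range (ddb A d1 d2 p (q + 1))).comap (d2 _ _)) ?_
    intro i z hz h0
    rw [Submodule.mem_comap]
    rcases tri i p q z hz with h | ⟨w, rfl⟩ | ⟨w, rfl⟩ | ⟨-, h⟩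
    · simp [h h0]
    · refine ⟨-w, ?_⟩
      rw [map_neg, neg_eq_iff_add_eq_zero]
      exact hcomm p (q + 1) w
    · simp [hd2]
    · simp [h]
  have key3 : ∀ p q (y : A p (q + 1)), ddb A d1 d2 _ _ y = 0 →
      d1 _ _ y ∈ range (d2 (p + 1) q) := by
    intro p q
    obtain ⟨p, rfl⟩ : ∃ p', p = p' + 1 := ⟨p - 1, by ring⟩
    refine ker_le_of_pieces _ _ (ddb A d1 d2 _ _) (htop _ _) (hdis _ _) (fun i => m12 i _ _)
      ((range (d2 (p + 1 + 1) q)).comap (d1 _ _)) ?_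
    intro i z hz h0
    rw [Submodule.mem_comap]
    rcases tri i p q z hz with h | ⟨w, rfl⟩ | ⟨w, rfl⟩ | ⟨h, -⟩
    · simp [h h0]
    · simp [hd1]
    · refine ⟨-d1 _ _ w, ?_⟩
      rw [map_neg, neg_eq_iff_add_eq_zero]
      exact (add_comm _ _).trans (hcomm (p + 1) q w)
    · simp [h]
  have key2 : ∀ p q (x : A (p + 1) (q + 1)), d2 _ _ x = 0 →
      x ∈ ker (d1 (p + 1) (q + 1)) ⊔ range (d2 (p + 1) q) := by
    intro p q
    refine ker_le_of_pieces _ _ (d2 _ _) (htop _ _) (hdis _ _) (fun i => m2 i _ _) _ ?_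
    intro i x hx h0
    rcases tri i p q x hx with h | ⟨w, rfl⟩ | ⟨w, rfl⟩ | ⟨h, -⟩
    · rw [h (by simp [h0])]; exact zero_mem _
    · exact Submodule.mem_sup_left (hd1 _ _ w)
    · exact Submodule.mem_sup_right ⟨w, rfl⟩
    · exact Submodule.mem_sup_left h
  have key4 : ∀ p q (x : A (p + 1) (q + 1)), ddb A d1 d2 _ _ x = 0 →
      x ∈ ker (d2 (p + 1) (q + 1)) ⊔ (range (d1 p (q + 1)) ⊔ range (d2 (p + 1) q)) := by
    intro p q
    refine ker_le_of_pieces _ _ (ddb A d1 d2 _ _) (htop _ _) (hdis _ _) (fun i => m12 i _ _) _ ?_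
    intro i x hx h0
    rcases tri i p q x hx with h | ⟨w, rfl⟩ | ⟨w, rfl⟩ | ⟨-, h⟩
    · rw [h h0]; exact zero_mem _
    · exact Submodule.mem_sup_right (Submodule.mem_sup_left ⟨w, rfl⟩)
    · exact Submodule.mem_sup_right (Submodule.mem_sup_right ⟨w, rfl⟩)
    · exact Submodule.mem_sup_left h
  intro p q
  refine ⟨⟨?_, ?_⟩, ⟨?_, ?_⟩⟩
  · rw [injective_iff_map_eq_zero]
    intro c hc
    obtain ⟨⟨x, hx⟩, rfl⟩ := Submodule.Quotient.mk_surjective _ c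
    have hx' := (Submodule.Quotient.mk_eq_zero
      ((range (d2 (p + 1) q)).comap (ker (d2 (p + 1) (q + 1))).subtype)).1 hc
    obtain ⟨z, hz⟩ : x ∈ range (d2 (p + 1) q) := hx'
    subst hz
    exact (Submodule.Quotient.mk_eq_zero _).2 (key1 p q z hx.1)
  · intro c
    obtain ⟨⟨x, hx⟩, rfl⟩ := Submodule.Quotient.mk_surjective _ c
    obtain ⟨u, hu, v, hv, huv⟩ := Submodule.mem_sup.1 (key2 p q x hx)
    have hu2 : d2 _ _ u = 0 := by
      obtain ⟨w, rfl⟩ := hv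
      have h : d2 _ _ x = 0 := hx
      rwa [← huv, map_add, hd2, add_zero] at h
    refine ⟨Submodule.Quotient.mk ⟨u, hu, hu2⟩, ?_⟩
    refine (Submodule.Quotient.eq _).2 ?_
    show u - x ∈ range (d2 (p + 1) q)
    rw [← huv, sub_add_cancel_left]
    exact neg_mem hv
  · rw [injective_iff_map_eq_zero]
    intro c hc
    obtain ⟨⟨x, hx⟩, rfl⟩ := Submodule.Quotient.mk_surjective _ c
    have hx' : x ∈ range (d1 p (q + 1)) ⊔ range (d2 (p + 1) q) :=
      (Submodule.Quotient.mk_eq_zero ((range (d1 p (q + 1)) ⊔ range (d2 (p + 1) q)).comap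
        (ker (ddb A d1 d2 (p + 1) (q + 1))).subtype)).1 hc
    obtain ⟨_, ⟨y, rfl⟩, _, ⟨z, rfl⟩, rfl⟩ := Submodule.mem_sup.1 hx'
    refine (Submodule.Quotient.mk_eq_zero _).2 ?_
    show _ ∈ range (d2 (p + 1) q)
    refine add_mem (key3 p q y ?_) ⟨z, rfl⟩
    have h : d2 _ _ (d1 p (q + 1) y + d2 (p + 1) q z) = 0 := hx
    rw [map_add, hd2, add_zero] at h
    have h' := hcomm p (q + 1) y
    rwa [h, add_zero] at h'
  · intro c
    obtain ⟨⟨x, hx⟩, rfl⟩ := Submodule.Quotient.mk_surjective _ c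
    obtain ⟨u, hu, v, hv, huv⟩ := Submodule.mem_sup.1 (key4 p q x hx)
    refine ⟨Submodule.Quotient.mk ⟨u, hu⟩, ?_⟩
    refine (Submodule.Quotient.eq _).2 ?_
    show u - x ∈ range (d1 p (q + 1)) ⊔ range (d2 (p + 1) q)
    rw [← huv, sub_add_cancel_left]
    exact neg_mem hv
end
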